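/- There exists a negative continuous subharmonic exhaustion function u of the unit disc 𝔻 with finite Monge–Ampère mass ∫_𝔻 dd^c u < ∞ such that the Poletsky–Stessin Hardy space H^1_u(𝔻) is a proper subset of the classical Hardy space H^1(𝔻). -/

import Mathlib

open MeasureTheory Filter Metric Complex Set
open scoped Real ENNReal Topology

noncomputable section

/-- The Laplacian of a real-valued function on `ℂ ≅ ℝ²`. -/
def lap (φ : ℂ → ℝ) (z : ℂ) : ℝ :=
  fderiv ℝ (fun w => fderiv ℝ φ w 1) z 1 +
    fderiv ℝ (fun w => fderiv ℝ φ w Complex.I) z Complex.I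

/-- `h` is harmonic on `s`. -/
def HarmonicOn (h : ℂ → ℝ) (s : Set ℂ) : Prop :=
  ContDiffOn ℝ 2 h s ∧ ∀ z ∈ s, lap h z = 0

/-- `u` is subharmonic on `s` (continuous with the sub-mean-value property). -/
def SubharmonicOn (u : ℂ → ℝ) (s : Set ℂ) : Prop :=
  ContinuousOn u s ∧ ∀ z ∈ s, ∀ r : ℝ, 0 < r → closedBall z r ⊆ s →
    u z ≤ (2 * Real.pi)⁻¹ *
      ∫ t in (0:ℝ)..(2 * Real.pi), u (z + (r : ℂ) * Complex.exp ((t : ℂ) * Complex.I))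

/-- `u` is a negative continuous subharmonic exhaustion function for `Ω`:
sublevel sets `{u < c}`, `c < 0`, are relatively compact in `Ω`. -/
structure IsExhaustion (u : ℂ → ℝ) (Ω : Set ℂ) : Prop where
  neg : ∀ z ∈ Ω, u z < 0
  subh : SubharmonicOn u Ω
  exh : ∀ c : ℝ, c < 0 → IsCompact (closure {z | z ∈ Ω ∧ u z < c}) ∧
    closure {z | z ∈ Ω ∧ u z < c} ⊆ Ω

/-- `ν` is the Riesz measure `dd^c u = (1/4) Δu dA` of `u` on `Ω`, characterized
distributionally: `∫ φ dν = (1/4) ∫_Ω u Δφ dA` for test functions `φ`. -/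
def IsRieszMeasure (u : ℂ → ℝ) (Ω : Set ℂ) (ν : Measure ℂ) : Prop :=
  ν Ωᶜ = 0 ∧
  ∀ φ : ℂ → ℝ, ContDiff ℝ 2 φ → HasCompactSupport φ → tsupport φ ⊆ Ω →
    ∫ z, φ z ∂ν = (4 : ℝ)⁻¹ * ∫ z in Ω, u z * lap φ z

/-- `μ` is the Monge–Ampère measure `μ_{u,r} = dd^c max(u,r) - χ_{Ω∖{u<r}} dd^c u`,
where `ν = dd^c u`. -/
def IsMAMeasure (u : ℂ → ℝ) (Ω : Set ℂ) (ν : Measure ℂ) (r : ℝ) (μ : Measure ℂ) : Prop :=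
  ∃ νr : Measure ℂ, IsRieszMeasure (fun z => max (u z) r) Ω νr ∧
    μ = νr - ν.restrict {z | z ∈ Ω ∧ r ≤ u z}

/-- The `p`-th power of the Poletsky–Stessin Hardy "norm",
`limsup_{r→0⁻} ∫ |f|^p dμ_{u,r}`. -/
def psNormPow (p : ℝ) (μfam : ℝ → Measure ℂ) (f : ℂ → ℂ) : ℝ≥0∞ :=
  Filter.limsup (fun r => ∫⁻ z, ENNReal.ofReal (‖f z‖ ^ p) ∂(μfam r))
    (nhdsWithin 0 (Set.Iio 0))

/-- The Poletsky–Stessin Hardy norm. -/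
def psNorm (p : ℝ) (μfam : ℝ → Measure ℂ) (f : ℂ → ℂ) : ℝ≥0∞ :=
  psNormPow p μfam f ^ (1 / p)

/-- Membership in the Poletsky–Stessin Hardy space `H^p_u(Ω)`, where `μfam r = μ_{u,r}`. -/
def MemPS (p : ℝ) (Ω : Set ℂ) (μfam : ℝ → Measure ℂ) (f : ℂ → ℂ) : Prop :=
  DifferentiableOn ℂ f Ω ∧ psNormPow p μfam f < ⊤

/-- Membership in the classical Hardy space `H^p(Ω)`: `|f|^p` has a harmonic majorant. -/
def MemHClassical (p : ℝ) (Ω : Set ℂ) (f : ℂ → ℂ) : Prop :=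
  DifferentiableOn ℂ f Ω ∧
    ∃ h : ℂ → ℝ, HarmonicOn h Ω ∧ ∀ z ∈ Ω, ‖f z‖ ^ p ≤ h z

/-- A bounded domain in `ℂ` containing `0` whose boundary is an analytic Jordan curve:
there is a conformal map of the unit disc onto `Ω` extending analytically and injectively
across the closed disc, carrying the unit circle onto the boundary of `Ω`. -/
structure AnalyticJordanDomain (Ω : Set ℂ) : Prop where
  isOpen : IsOpen Ω
  isConnected : IsConnected Ω
  isBounded : Bornology.IsBounded Ω
  zero_mem : (0:ℂ) ∈ Ω
  analyticBoundary : ∃ (U : Set ℂ) (ψ : ℂ → ℂ), IsOpen U ∧ closedBall (0:ℂ) 1 ⊆ U ∧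
    DifferentiableOn ℂ ψ U ∧ Set.InjOn ψ U ∧ ψ '' ball (0:ℂ) 1 = Ω ∧
    ψ '' sphere (0:ℂ) 1 = frontier Ω

/-- `μ` is the boundary Monge–Ampère measure: the weak* limit of the measures
`μfam r = μ_{u,r}` as `r → 0⁻`. -/
def IsBoundaryMA (μfam : ℝ → Measure ℂ) (μ : Measure ℂ) : Prop :=
  ∀ φ : ℂ → ℝ, Continuous φ →
    Filter.Tendsto (fun r => ∫ z, φ z ∂(μfam r)) (nhdsWithin 0 (Set.Iio 0))
      (nhds (∫ z, φ z ∂μ))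

/-- `f` has nontangential limit `L` at the boundary point `ξ` of `Ω`. -/
def NTLim (Ω : Set ℂ) (f : ℂ → ℂ) (ξ : ℂ) (L : ℂ) : Prop :=
  ∀ C : ℝ, 1 < C →
    Filter.Tendsto f
      (nhdsWithin ξ {z | z ∈ Ω ∧ dist z ξ ≤ C * infDist z (frontier Ω)}) (nhds L)

/-- Arc length measure on the boundary of `Ω` (1-dimensional Hausdorff measure). -/
def arcLen (Ω : Set ℂ) : Measure ℂ := (μH[1] : Measure ℂ).restrict (frontier Ω)


/-- The classical Hardy space `H^1(𝔻)`: holomorphic on the unit disc with uniformly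
bounded integral means `∫_0^{2π} |f(r e^{iθ})| dθ`, `0 < r < 1`. -/
def MemH1Disc (f : ℂ → ℂ) : Prop :=
  DifferentiableOn ℂ f (ball (0:ℂ) 1) ∧
    ∃ M : ℝ, ∀ r : ℝ, 0 < r → r < 1 →
      (∫ θ in (0:ℝ)..(2 * Real.pi),
        ‖f ((r : ℂ) * Complex.exp ((θ : ℂ) * Complex.I))‖) ≤ M



lemma cd_fderiv {φ : ℂ → ℝ} {z : ℂ} (h : ContDiffAt ℝ 2 φ z) (e : ℂ) :
    DifferentiableAt ℝ (fun w => fderiv ℝ φ w e) z := by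
  have h1 : ContDiffAt ℝ 1 (fderiv ℝ φ) z := h.fderiv_right (by norm_num)
  exact (h1.differentiableAt (by norm_num)).clm_apply (differentiableAt_const _)

lemma cd_ev {φ : ℂ → ℝ} {z : ℂ} (h : ContDiffAt ℝ 2 φ z) :
    ∀ᶠ w in 𝓝 z, DifferentiableAt ℝ φ w := by
  filter_upwards [h.eventually (by simp)] with w hw
  exact hw.differentiableAt (by norm_num)

lemma lap_congr {φ ψ : ℂ → ℝ} {z : ℂ} (h : φ =ᶠ[𝓝 z] ψ) : lap φ z = lap ψ z := by
  unfold lap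
  have key : ∀ e : ℂ, (fun w => fderiv ℝ φ w e) =ᶠ[𝓝 z] (fun w => fderiv ℝ ψ w e) := by
    intro e
    filter_upwards [h.fderiv (𝕜 := ℝ)] with w hw
    rw [hw]
  rw [(key 1).fderiv_eq, (key I).fderiv_eq]

/-- second directional derivative of a composition -/
lemma dd_comp {g : ℂ → ℝ} {η : ℝ → ℝ} {z : ℂ} (hg : ContDiffAt ℝ 2 g z)
    (hη : ContDiffAt ℝ 2 η (g z)) (e : ℂ) :
    fderiv ℝ (fun w => fderiv ℝ (fun v => η (g v)) w e) z e =
      deriv (deriv η) (g z) * (fderiv ℝ g z e) ^ 2 +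
      deriv η (g z) * fderiv ℝ (fun w => fderiv ℝ g w e) z e := by
  have hgc := hg.continuousAt
  have e1 : ∀ᶠ w in 𝓝 z, fderiv ℝ (fun v => η (g v)) w e = deriv η (g w) * fderiv ℝ g w e := by
    have hd : ∀ᶠ t in 𝓝 (g z), DifferentiableAt ℝ η t := by
      filter_upwards [hη.eventually (by simp)] with w hw
      exact hw.differentiableAt (by norm_num)
    filter_upwards [cd_ev hg, hgc.eventually hd] with w h1 h2
    have := (h2.hasDerivAt.comp_hasFDerivAt w h1.hasFDerivAt).fderiv
    change fderiv ℝ (η ∘ g) w e = _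
    rw [this]; simp
  have e1' : (fun w => fderiv ℝ (fun v => η (g v)) w e) =ᶠ[𝓝 z]
    (fun w => deriv η (g w) * fderiv ℝ g w e) := e1
  rw [e1'.fderiv_eq]
  have hd2 : DifferentiableAt ℝ (deriv η) (g z) := by
    have : ContDiffAt ℝ 1 (deriv η) (g z) := by
      have h0 : ContDiffAt ℝ 1 (fderiv ℝ η) (g z) := hη.fderiv_right (by norm_num)
      have h1 : ContDiffAt ℝ 1 (fun x => fderiv ℝ η x 1) (g z) := h0.clm_apply contDiffAt_const
      simpa using h1
    exact this.differentiableAt (by norm_num)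
  have hz := (cd_ev hg).self_of_nhds
  have h3 := (hd2.hasDerivAt.comp_hasFDerivAt z hz.hasFDerivAt)
  have h4 := (cd_fderiv hg e).hasFDerivAt
  have h5 := (h3.mul h4).fderiv
  change fderiv ℝ ((deriv η ∘ g) * (fun w => fderiv ℝ g w e)) z e = _
  rw [h5]
  simp
  ring

lemma dd_mul {f g : ℂ → ℝ} {z : ℂ} (hf : ContDiffAt ℝ 2 f z)
    (hg : ContDiffAt ℝ 2 g z) (e : ℂ) :
    fderiv ℝ (fun w => fderiv ℝ (fun v => f v * g v) w e) z e =
      f z * fderiv ℝ (fun w => fderiv ℝ g w e) z e + g z * fderiv ℝ (fun w => fderiv ℝ f w e) z e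
      + 2 * (fderiv ℝ f z e * fderiv ℝ g z e) := by
  have e1 : (fun w => fderiv ℝ (fun v => f v * g v) w e) =ᶠ[𝓝 z]
      (fun w => f w * fderiv ℝ g w e + g w * fderiv ℝ f w e) := by
    filter_upwards [cd_ev hf, cd_ev hg] with w h1 h2
    have := (h1.hasFDerivAt.mul h2.hasFDerivAt).fderiv
    change fderiv ℝ (f * g) w e = _
    rw [this]; simp
  rw [e1.fderiv_eq]
  have hz1 := (cd_ev hf).self_of_nhds.hasFDerivAt
  have hz2 := (cd_ev hg).self_of_nhds.hasFDerivAt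
  have h3 := (cd_fderiv hf e).hasFDerivAt
  have h4 := (cd_fderiv hg e).hasFDerivAt
  have h5 := ((hz1.mul h4).add (hz2.mul h3)).fderiv
  change fderiv ℝ (f * (fun w => fderiv ℝ g w e) + g * (fun w => fderiv ℝ f w e)) z e = _
  rw [h5]
  simp
  ring

lemma lap_comp {g : ℂ → ℝ} {η : ℝ → ℝ} {z : ℂ} (hg : ContDiffAt ℝ 2 g z)
    (hη : ContDiffAt ℝ 2 η (g z)) :
    lap (fun v => η (g v)) z =
      deriv (deriv η) (g z) * ((fderiv ℝ g z 1) ^ 2 + (fderiv ℝ g z I) ^ 2) +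
      deriv η (g z) * lap g z := by
  unfold lap
  rw [dd_comp hg hη, dd_comp hg hη]; ring

lemma lap_mul {f g : ℂ → ℝ} {z : ℂ} (hf : ContDiffAt ℝ 2 f z)
    (hg : ContDiffAt ℝ 2 g z) :
    lap (fun v => f v * g v) z = f z * lap g z + g z * lap f z +
      2 * (fderiv ℝ f z 1 * fderiv ℝ g z 1 + fderiv ℝ f z I * fderiv ℝ g z I) := by
  unfold lap
  rw [dd_mul hf hg, dd_mul hf hg]; ring

lemma cont_lap {φ : ℂ → ℝ} (h : ContDiff ℝ 2 φ) : Continuous (lap φ) := by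
  have h1 : ContDiff ℝ 1 (fderiv ℝ φ) := h.fderiv_right (by norm_num)
  have key : ∀ e : ℂ, Continuous (fun z => fderiv ℝ (fun w => fderiv ℝ φ w e) z e) := by
    intro e
    have h2 : ContDiff ℝ 1 (fun w => fderiv ℝ φ w e) := h1.clm_apply contDiff_const
    exact (h2.continuous_fderiv (by norm_num)).clm_apply continuous_const
  exact (key 1).add (key I)

lemma supp_lap {φ : ℂ → ℝ} {z : ℂ} (hz : z ∉ tsupport φ) : lap φ z = 0 := by
  have h : φ =ᶠ[𝓝 z] (fun _ => (0:ℝ)) := notMem_tsupport_iff_eventuallyEq.mp hz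
  rw [lap_congr h]; simp [lap]

lemma hcs_lap {φ : ℂ → ℝ} (h : HasCompactSupport φ) : HasCompactSupport (lap φ) := by
  refine HasCompactSupport.intro (K := tsupport φ) h ?_
  intro x hx; exact supp_lap hx

/-- Green's identity -/
lemma ibp {F φ : ℂ → ℝ} (hF : ContDiff ℝ 2 F) (hφ : ContDiff ℝ 2 φ) (hc : HasCompactSupport F) :
    ∫ z, F z * lap φ z = ∫ z, φ z * lap F z := by
  have key : ∀ e : ℂ, (∫ z, F z * fderiv ℝ (fun w => fderiv ℝ φ w e) z e) =
      ∫ z, φ z * fderiv ℝ (fun w => fderiv ℝ F w e) z e := by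
    intro e
    have c1 : ContDiff ℝ 1 (fderiv ℝ F) := hF.fderiv_right (by norm_num)
    have d1 : ContDiff ℝ 1 (fderiv ℝ φ) := hφ.fderiv_right (by norm_num)
    have c2 : ContDiff ℝ 1 (fun w => fderiv ℝ F w e) := c1.clm_apply contDiff_const
    have d2 : ContDiff ℝ 1 (fun w => fderiv ℝ φ w e) := d1.clm_apply contDiff_const
    have c3 : Continuous (fun z => fderiv ℝ (fun w => fderiv ℝ F w e) z e) :=
      (c2.continuous_fderiv (by norm_num)).clm_apply continuous_const
    have d3 : Continuous (fun z => fderiv ℝ (fun w => fderiv ℝ φ w e) z e) :=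
      (d2.continuous_fderiv (by norm_num)).clm_apply continuous_const
    have s1 : HasCompactSupport (fun w => fderiv ℝ F w e) := hc.fderiv_apply (𝕜 := ℝ) e
    have s2 : HasCompactSupport (fun z => fderiv ℝ (fun w => fderiv ℝ F w e) z e) :=
      s1.fderiv_apply (𝕜 := ℝ) e
    have i1 := integral_mul_fderiv_eq_neg_fderiv_mul_of_integrable (𝕜 := ℝ) (μ := (volume : Measure ℂ))
      (f := F) (g := fun w => fderiv ℝ φ w e) (v := e)
      ((c2.continuous.mul d2.continuous).integrable_of_hasCompactSupport s1.mul_right)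
      ((hF.continuous.mul d3).integrable_of_hasCompactSupport hc.mul_right)
      ((hF.continuous.mul d2.continuous).integrable_of_hasCompactSupport hc.mul_right)
      (fun x _ => (hF.differentiable (by norm_num)) x) (fun x _ => (d2.differentiable (by norm_num)) x)
    have i2 := integral_mul_fderiv_eq_neg_fderiv_mul_of_integrable (𝕜 := ℝ) (μ := (volume : Measure ℂ))
      (f := fun w => fderiv ℝ F w e) (g := φ) (v := e)
      ((c3.mul hφ.continuous).integrable_of_hasCompactSupport s2.mul_right)
      ((c2.continuous.mul d2.continuous).integrable_of_hasCompactSupport s1.mul_right)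
      ((c2.continuous.mul hφ.continuous).integrable_of_hasCompactSupport s1.mul_right)
      (fun x _ => (c2.differentiable (by norm_num)) x) (fun x _ => (hφ.differentiable (by norm_num)) x)
    rw [i1, i2, neg_neg]
    congr 1; ext z; ring
  have c1 : ContDiff ℝ 1 (fderiv ℝ F) := hF.fderiv_right (by norm_num)
  have d1 : ContDiff ℝ 1 (fderiv ℝ φ) := hφ.fderiv_right (by norm_num)
  have c3 : ∀ e, Continuous (fun z => fderiv ℝ (fun w => fderiv ℝ F w e) z e) := fun e =>
    ((c1.clm_apply contDiff_const : ContDiff ℝ 1 (fun w => fderiv ℝ F w e)).continuous_fderiv (by norm_num)).clm_apply continuous_const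
  have d3 : ∀ e, Continuous (fun z => fderiv ℝ (fun w => fderiv ℝ φ w e) z e) := fun e =>
    ((d1.clm_apply contDiff_const : ContDiff ℝ 1 (fun w => fderiv ℝ φ w e)).continuous_fderiv (by norm_num)).clm_apply continuous_const
  have s2 : ∀ e, HasCompactSupport (fun z => fderiv ℝ (fun w => fderiv ℝ F w e) z e) := fun e =>
      (hc.fderiv_apply (𝕜 := ℝ) e).fderiv_apply (𝕜 := ℝ) e
  unfold lap
  simp_rw [mul_add]
  rw [integral_add, integral_add, key, key]
  all_goals first
    | exact (hφ.continuous.mul (c3 _)).integrable_of_hasCompactSupport (s2 _).mul_left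
    | exact (hF.continuous.mul (d3 _)).integrable_of_hasCompactSupport hc.mul_right

/-- globalize a function on the disc -/
lemma globalize {g : ℂ → ℝ} (hg : ContDiffOn ℝ 2 g (ball 0 1)) {R : ℝ} (hR0 : 0 < R) (hR : R < 1) :
    ∃ G : ℂ → ℝ, ContDiff ℝ 2 G ∧ HasCompactSupport G ∧ tsupport G ⊆ ball 0 1 ∧
      ∀ z ∈ ball (0:ℂ) R, G z = g z := by
  let χ : ContDiffBump (0:ℂ) := ⟨R, (R+1)/2, hR0, by linarith⟩
  have ht : tsupport (fun z => χ z * g z) ⊆ closedBall 0 ((R+1)/2) := by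
    refine (tsupport_mul_subset_left (f := χ) (g := g)).trans ?_
    rw [χ.tsupport_eq]
  have hsub : closedBall (0:ℂ) ((R+1)/2) ⊆ ball 0 1 := closedBall_subset_ball (by linarith)
  refine ⟨fun z => χ z * g z, ?_, ?_, ht.trans hsub, ?_⟩
  · rw [contDiff_iff_contDiffAt]
    intro z
    by_cases hz : z ∈ ball (0:ℂ) 1
    · exact (χ.contDiff.contDiffAt).mul (hg.contDiffAt (isOpen_ball.mem_nhds hz))
    · have : z ∉ tsupport (fun z => χ z * g z) := fun h => hz (hsub (ht h))
      have := notMem_tsupport_iff_eventuallyEq.mp this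
      exact contDiffAt_const.congr_of_eventuallyEq this
  · exact HasCompactSupport.mul_right χ.hasCompactSupport
  · intro z hz
    simp only
    rw [χ.one_of_mem_closedBall (ball_subset_closedBall hz), one_mul]


/-- smooth approximation of the positive part -/
def Est (s : ℝ) : ℝ := ∫ t in (0:ℝ)..s, Real.smoothTransition t

lemma Est_hasDerivAt (s : ℝ) : HasDerivAt Est (Real.smoothTransition s) s :=
  intervalIntegral.integral_hasDerivAt_right
    (Real.smoothTransition.continuous.intervalIntegrable _ _)
    (Real.smoothTransition.continuous.stronglyMeasurableAtFilter _ _)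
    Real.smoothTransition.continuous.continuousAt

lemma Est_deriv : deriv Est = Real.smoothTransition := funext fun s => (Est_hasDerivAt s).deriv

lemma st_contDiff : ContDiff ℝ 2 Real.smoothTransition :=
  Real.smoothTransition.contDiff (n := 2)

lemma Est_contDiff : ContDiff ℝ 2 Est := by
  have : ContDiff ℝ (1 + 1) Est := by
    rw [contDiff_succ_iff_deriv]
    refine ⟨fun s => (Est_hasDerivAt s).differentiableAt, by simp, ?_⟩
    rw [Est_deriv]; exact st_contDiff.of_le (by norm_num)
  exact this.of_le (by norm_num)

lemma Est_of_nonpos {s : ℝ} (hs : s ≤ 0) : Est s = 0 := by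
  unfold Est
  rw [intervalIntegral.integral_congr (g := fun _ => (0:ℝ))]
  · simp
  · intro t ht
    rw [uIcc_of_ge hs] at ht
    exact Real.smoothTransition.zero_of_nonpos ht.2

lemma Est_nonneg (s : ℝ) : 0 ≤ Est s := by
  rcases le_total s 0 with h | h
  · rw [Est_of_nonpos h]
  · exact intervalIntegral.integral_nonneg h fun t _ => Real.smoothTransition.nonneg t

lemma Est_le {s : ℝ} (hs : 0 ≤ s) : Est s ≤ s := by
  have := intervalIntegral.integral_mono_on (μ := volume) hs
    (Real.smoothTransition.continuous.intervalIntegrable 0 s)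
    (_root_.intervalIntegrable_const (c := (1:ℝ)))
    (fun t _ => Real.smoothTransition.le_one t)
  simpa [Est] using this

lemma Est_ge (s : ℝ) : s - 1 ≤ Est s := by
  rcases le_total s 1 with h | h
  · linarith [Est_nonneg s]
  · have h1 : Est s = Est 1 + ∫ t in (1:ℝ)..s, Real.smoothTransition t := by
      unfold Est
      rw [intervalIntegral.integral_add_adjacent_intervals] <;>
      exact Real.smoothTransition.continuous.intervalIntegrable _ _
    have h2 : ∫ t in (1:ℝ)..s, Real.smoothTransition t = s - 1 := by
      rw [intervalIntegral.integral_congr (g := fun _ => (1:ℝ))]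
      · simp
      · intro t ht
        rw [uIcc_of_le h] at ht
        exact Real.smoothTransition.one_of_one_le ht.1
    rw [h1, h2]; linarith [Est_nonneg 1]

def etaP (a s : ℝ) : ℝ := a⁻¹ * Est (a * s)

lemma etaP_contDiff (a : ℝ) : ContDiff ℝ 2 (etaP a) :=
  contDiff_const.mul (Est_contDiff.comp (contDiff_const.mul contDiff_id))

lemma etaP_deriv {a : ℝ} (ha : 0 < a) : deriv (etaP a) = fun s => Real.smoothTransition (a * s) := by
  ext s
  have h1 : HasDerivAt (fun s => a * s) a s := by simpa using (hasDerivAt_id s).const_mul a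
  have := ((Est_hasDerivAt (a * s)).comp s h1).const_mul a⁻¹
  have h2 := this.deriv
  change deriv (fun s => a⁻¹ * Est (a * s)) s = _
  rw [show (fun s => a⁻¹ * Est (a * s)) = fun y => a⁻¹ * (Est ∘ fun s => a * s) y from rfl, h2]
  field_simp

lemma etaP_deriv2_nonneg {a : ℝ} (ha : 0 < a) (s : ℝ) : 0 ≤ deriv (deriv (etaP a)) s := by
  rw [etaP_deriv ha]
  apply Monotone.deriv_nonneg
  exact Real.smoothTransition.monotone.comp (monotone_mul_left_of_nonneg ha.le)

lemma etaP_deriv2_cont {a : ℝ} (ha : 0 < a) : Continuous (deriv (deriv (etaP a))) := by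
  rw [etaP_deriv ha]
  have : ContDiff ℝ 2 (fun s => Real.smoothTransition (a * s)) :=
    st_contDiff.comp (contDiff_const.mul contDiff_id)
  exact this.continuous_deriv (by norm_num)

lemma etaP_deriv2_zero {a : ℝ} (ha : 0 < a) {s : ℝ} (hs : s < 0 ∨ 1 / a < s) :
    deriv (deriv (etaP a)) s = 0 := by
  rw [etaP_deriv ha]
  rcases hs with hs | hs
  · have : (fun s => Real.smoothTransition (a * s)) =ᶠ[𝓝 s] fun _ => 0 := by
      filter_upwards [Iio_mem_nhds hs] with t ht
      exact Real.smoothTransition.zero_of_nonpos (mul_nonpos_of_nonneg_of_nonpos ha.le (le_of_lt ht))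
    rw [this.deriv_eq]; simp
  · have : (fun s => Real.smoothTransition (a * s)) =ᶠ[𝓝 s] fun _ => 1 := by
      filter_upwards [Ioi_mem_nhds hs] with t ht
      refine Real.smoothTransition.one_of_one_le ?_
      have := (div_lt_iff₀ ha).1 ht
      linarith
    rw [this.deriv_eq]; simp

lemma etaP_of_nonpos {a : ℝ} (ha : 0 < a) {s : ℝ} (hs : s ≤ 0) : etaP a s = 0 := by
  unfold etaP; rw [Est_of_nonpos (mul_nonpos_of_nonneg_of_nonpos ha.le hs), mul_zero]

lemma etaP_nonneg {a : ℝ} (ha : 0 < a) (s : ℝ) : 0 ≤ etaP a s :=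
  mul_nonneg (inv_nonneg.2 ha.le) (Est_nonneg _)

lemma etaP_le {a : ℝ} (ha : 0 < a) {s : ℝ} (hs : 0 ≤ s) : etaP a s ≤ s := by
  unfold etaP
  have := Est_le (mul_nonneg ha.le hs)
  calc a⁻¹ * Est (a * s) ≤ a⁻¹ * (a * s) := by gcongr
    _ = s := by field_simp

lemma etaP_ge {a : ℝ} (ha : 0 < a) (s : ℝ) : s - a⁻¹ ≤ etaP a s := by
  unfold etaP
  calc s - a⁻¹ = a⁻¹ * (a * s - 1) := by field_simp
    _ ≤ _ := by have := Est_ge (a * s); gcongr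

lemma etaP_abs_le {a : ℝ} (ha : 0 < a) (s : ℝ) : |etaP a s| ≤ |s| := by
  rcases le_total s 0 with h | h
  · rw [etaP_of_nonpos ha h]; simp
  · rw [abs_of_nonneg (etaP_nonneg ha s), abs_of_nonneg h]; exact etaP_le ha h

def aseq (n : ℕ) : ℝ := (n : ℝ) + 1
lemma aseq_pos (n : ℕ) : 0 < aseq n := by unfold aseq; positivity

lemma aseq_inv : Tendsto (fun n => (aseq n)⁻¹) atTop (𝓝 0) := by
  have := tendsto_one_div_add_atTop_nhds_zero_nat (𝕜 := ℝ)
  simpa [aseq] using this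

lemma etaP_tendsto (s : ℝ) : Tendsto (fun n => etaP (aseq n) s) atTop (𝓝 (max s 0)) := by
  rcases le_total s 0 with h | h
  · simp only [etaP_of_nonpos (aseq_pos _) h, max_eq_right h]; exact tendsto_const_nhds
  · rw [max_eq_left h]
    refine tendsto_of_tendsto_of_tendsto_of_le_of_le (g := fun n => s - (aseq n)⁻¹) (h := fun _ => s) ?_
      tendsto_const_nhds (fun n => etaP_ge (aseq_pos n) s) (fun n => etaP_le (aseq_pos n) h)
    simpa using tendsto_const_nhds.sub aseq_inv

lemma st_tendsto (s : ℝ) : Tendsto (fun n => Real.smoothTransition (aseq n * s)) atTop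
    (𝓝 (if 0 < s then 1 else 0)) := by
  split_ifs with h
  · apply tendsto_const_nhds.congr'
    have h1 := aseq_inv.eventually (Iio_mem_nhds h)
    filter_upwards [h1] with n hn
    symm
    apply Real.smoothTransition.one_of_one_le
    have hn : (aseq n)⁻¹ < s := hn
    have := (inv_lt_iff_one_lt_mul₀ (aseq_pos n)).1 hn
    linarith
  · push Not at h
    have : ∀ n, Real.smoothTransition (aseq n * s) = 0 := fun n =>
      Real.smoothTransition.zero_of_nonpos (mul_nonpos_of_nonneg_of_nonpos (aseq_pos n).le h)
    simp [this]

open CompactlySupported in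
/-- weak limits -/
lemma weak_limit (d : ℕ → ℂ → ℝ) (hd0 : ∀ n z, 0 ≤ d n z) (hdi : ∀ n, Integrable (d n))
    (K : Set ℂ) (hK : IsCompact K) (hdK : ∀ n, ∀ z ∉ K, d n z = 0) (B : ℝ) (hB : ∀ n, ∫ z, d n z ≤ B) :
    ∃ σ : Measure ℂ, IsFiniteMeasure σ ∧ σ Kᶜ = 0 ∧ ∀ φ : ℂ → ℝ, Continuous φ → HasCompactSupport φ →
      ∀ L : ℝ, Tendsto (fun n => ∫ z, φ z * d n z) atTop (𝓝 L) → ∫ z, φ z ∂σ = L := by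
  let 𝒰 : Ultrafilter ℕ := hyperfilter ℕ
  have hle : (𝒰 : Filter ℕ) ≤ atTop := Nat.hyperfilter_le_atTop
  have hint : ∀ (φ : C_c(ℂ, ℝ)) n, Integrable (fun z => φ z * d n z) := by
    intro φ n
    obtain ⟨C, hC⟩ := φ.continuous.bounded_above_of_compact_support φ.hasCompactSupport
    exact (hdi n).bdd_mul φ.continuous.aestronglyMeasurable (Eventually.of_forall hC)
  have hex : ∀ φ : C_c(ℂ, ℝ), ∃ L, Tendsto (fun n => ∫ z, φ z * d n z) 𝒰 (𝓝 L) := by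
    intro φ
    obtain ⟨C, hC⟩ := φ.continuous.bounded_above_of_compact_support φ.hasCompactSupport
    have hC0 : 0 ≤ C := (norm_nonneg _).trans (hC 0)
    have hb : ∀ n, (∫ z, φ z * d n z) ∈ Icc (-(C*B)) (C*B) := by
      intro n
      rw [mem_Icc, ← abs_le]
      calc |∫ z, φ z * d n z| ≤ ∫ z, |φ z * d n z| := abs_integral_le_integral_abs
        _ ≤ ∫ z, C * d n z := by
            refine integral_mono (hint φ n).abs ((hdi n).const_mul C) fun z => ?_
            simp only [abs_mul, abs_of_nonneg (hd0 n z)]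
            exact mul_le_mul_of_nonneg_right (hC z) (hd0 n z)
        _ = C * ∫ z, d n z := integral_const_mul _ _
        _ ≤ C * B := by gcongr; exact hB n
    obtain ⟨L, -, hL⟩ := (isCompact_Icc (a := -(C*B)) (b := C*B)).ultrafilter_le_nhds
      (𝒰.map (fun n => ∫ z, φ z * d n z)) (by
        simp only [Ultrafilter.coe_map, le_principal_iff, mem_map]
        exact Eventually.of_forall hb)
    exact ⟨L, hL⟩
  choose Λ0 hΛ0 using hex
  let Λl : C_c(ℂ, ℝ) →ₗ[ℝ] ℝ :=
    { toFun := Λ0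
      map_add' := by
        intro f g
        refine tendsto_nhds_unique (hΛ0 (f+g)) (((hΛ0 f).add (hΛ0 g)).congr fun n => ?_)
        rw [← integral_add (hint f n) (hint g n)]
        congr 1; ext z; simp [add_mul]
      map_smul' := by
        intro c f
        refine tendsto_nhds_unique (hΛ0 (c • f)) (((hΛ0 f).const_mul c).congr fun n => ?_)
        rw [← integral_const_mul]
        congr 1; ext z; simp [mul_assoc] }
  have hpos : ∀ f : C_c(ℂ, ℝ), 0 ≤ f → 0 ≤ Λl f := by
    intro f hf
    refine ge_of_tendsto' (hΛ0 f) fun n => integral_nonneg fun z => mul_nonneg (hf z) (hd0 n z)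
  let Λ : C_c(ℂ, ℝ) →ₚ[ℝ] ℝ := PositiveLinearMap.mk₀ Λl hpos
  have hΛ : ∀ f, Λ f = Λ0 f := fun f => rfl
  let σ := RealRMK.rieszMeasure Λ
  have hσK : σ Kᶜ = 0 := by
    rw [hK.isClosed.isOpen_compl.measure_eq_iSup_isCompact σ]
    simp only [ENNReal.iSup_eq_zero]
    intro C hCK hC
    obtain ⟨φ, h1, h2, h3⟩ := exists_continuous_one_zero_of_isCompact hC hK.isClosed
      (disjoint_left.2 fun x hx hk => hCK hx hk)
    obtain ⟨φ, h1, h2, h3, h4⟩ := exists_continuous_one_zero_of_isCompact_of_isGδ (X := ℂ) hC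
       hC.isClosed.isGδ hK.isClosed (disjoint_left.2 fun x hx hk => hCK hx hk)
    let f : C_c(ℂ, ℝ) := ⟨φ, h3⟩
    have h5 := RealRMK.rieszMeasure_le_of_eq_one Λ (f := f) (fun x => (h4 x).1) hC
      (fun x hx => by have : x ∈ φ ⁻¹' {1} := h1 ▸ hx
                      exact this)
    have h6 : Λ f = 0 := by
      rw [hΛ]
      refine tendsto_nhds_unique (hΛ0 f) (tendsto_const_nhds.congr fun n => ?_)
      symm
      refine integral_eq_zero_of_ae (Eventually.of_forall fun z => ?_)
      by_cases hz : z ∈ K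
      · have : f z = 0 := h2 hz
        simp [this]
      · simp [hdK n z hz]
    rw [h6] at h5
    simpa using h5
  refine ⟨σ, ⟨?_⟩, hσK, ?_⟩
  · calc σ univ ≤ σ K + σ Kᶜ := by rw [← union_compl_self K]; exact measure_union_le _ _
      _ < ⊤ := by rw [hσK, add_zero]; exact hK.measure_lt_top
  · intro φ hφ hφc L hL
    let f : C_c(ℂ, ℝ) := ⟨⟨φ, hφ⟩, hφc⟩
    have h1 : ∫ z, φ z ∂σ = Λ f := RealRMK.integral_rieszMeasure Λ f
    rw [h1, hΛ]
    exact tendsto_nhds_unique (hΛ0 f) (hL.mono_left hle)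


lemma lap_const_sub {U : ℂ → ℝ} (r : ℝ) (z : ℂ) : lap (fun w => r - U w) z = - lap U z := by
  unfold lap
  have : ∀ e : ℂ, (fun w => fderiv ℝ (fun w => r - U w) w e) = fun w => - fderiv ℝ U w e := by
    intro e; ext w; rw [fderiv_const_sub]; simp
  rw [this, this, fderiv_fun_neg, fderiv_fun_neg]
  simp; ring

lemma exists_sigma {u : ℂ → ℝ} (hu : ContDiffOn ℝ 2 u (ball 0 1)) {r R : ℝ} (hR0 : 0 < R) (hR1 : R < 1)
    (hK : ∀ z ∈ ball (0:ℂ) 1, u z < r → z ∈ closedBall (0:ℂ) R) :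
    ∃ σ : Measure ℂ, IsFiniteMeasure σ ∧ σ (closedBall 0 R)ᶜ = 0 ∧
      ∀ φ : ℂ → ℝ, ContDiff ℝ 2 φ → HasCompactSupport φ →
      ∫ z, φ z ∂σ = (4:ℝ)⁻¹ * ∫ z in {z | z ∈ ball (0:ℂ) 1 ∧ u z < r},
        ((r - u z) * lap φ z + φ z * lap u z) := by
  obtain ⟨U, hU, hUc, -, hUu⟩ := globalize hu (R := (R+1)/2) (by linarith) (by linarith)
  set R1 := (R+1)/2 with hR1d
  have hRR1 : R < R1 := by rw [hR1d]; linarith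
  have hR11 : R1 < 1 := by rw [hR1d]; linarith
  have hbb : ball (0:ℂ) R1 ⊆ ball 0 1 := ball_subset_ball hR11.le
  have hge : ∀ z ∈ ball (0:ℂ) R1, z ∉ closedBall (0:ℂ) R → r - U z ≤ 0 := by
    intro z hz hz'
    by_contra hcon
    push Not at hcon
    exact hz' (hK z (hbb hz) (by rw [← hUu z hz]; linarith))
  -- the approximations
  let F : ℕ → ℂ → ℝ := fun n => (ball (0:ℂ) R1).indicator (fun z => etaP (aseq n) (r - U z))
  have hFout : ∀ n, ∀ z ∉ closedBall (0:ℂ) R, F n z = 0 := by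
    intro n z hz
    by_cases hz1 : z ∈ ball (0:ℂ) R1
    · simp only [F, indicator_of_mem hz1]
      exact etaP_of_nonpos (aseq_pos n) (hge z hz1 hz)
    · simp only [F, indicator_of_notMem hz1]
  have hgc : ContDiff ℝ 2 (fun z => r - U z) := contDiff_const.sub hU
  have hcomp : ∀ n, ContDiff ℝ 2 (fun z => etaP (aseq n) (r - U z)) := fun n =>
    (etaP_contDiff _).comp hgc
  have hFin : ∀ n, ∀ z ∈ ball (0:ℂ) R1, F n =ᶠ[𝓝 z] (fun z => etaP (aseq n) (r - U z)) := by
    intro n z hz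
    filter_upwards [isOpen_ball.mem_nhds hz] with w hw
    simp only [F, indicator_of_mem hw]
  have hF0 : ∀ n, ∀ z ∉ closedBall (0:ℂ) R, F n =ᶠ[𝓝 z] (fun _ => 0) := by
    intro n z hz
    filter_upwards [isClosed_closedBall.isOpen_compl.mem_nhds hz] with w hw
    exact hFout n w hw
  have hcb : closedBall (0:ℂ) R ⊆ ball 0 R1 := closedBall_subset_ball hRR1
  have hFC : ∀ n, ContDiff ℝ 2 (F n) := by
    intro n
    rw [contDiff_iff_contDiffAt]
    intro z
    by_cases hz : z ∈ closedBall (0:ℂ) R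
    · exact ((hcomp n).contDiffAt).congr_of_eventuallyEq (hFin n z (hcb hz))
    · exact contDiffAt_const.congr_of_eventuallyEq (hF0 n z hz)
  have hFc : ∀ n, HasCompactSupport (F n) := fun n =>
    HasCompactSupport.intro (isCompact_closedBall 0 R) (fun z hz => hFout n z hz)
  let st : ℕ → ℂ → ℝ := fun n => (ball (0:ℂ) R1).indicator
    (fun z => Real.smoothTransition (aseq n * (r - U z)) * lap U z)
  have hst_int0 : ∀ n, Continuous (fun z => Real.smoothTransition (aseq n * (r - U z)) * lap U z) := fun n =>
    (Real.smoothTransition.continuous.comp (continuous_const.mul hgc.continuous)).mul (cont_lap hU)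
  let d : ℕ → ℂ → ℝ := fun n z => (4:ℝ)⁻¹ * (lap (F n) z + st n z)
  have hd : ∀ n z, d n z = (4:ℝ)⁻¹ * (ball (0:ℂ) R1).indicator (fun z => deriv (deriv (etaP (aseq n))) (r - U z) *
      ((fderiv ℝ (fun z => r - U z) z 1)^2 + (fderiv ℝ (fun z => r - U z) z I)^2)) z := by
    intro n z
    simp only [d, st]
    congr 1
    by_cases hz : z ∈ ball (0:ℂ) R1
    · rw [indicator_of_mem hz, indicator_of_mem hz, lap_congr (hFin n z hz),
        lap_comp hgc.contDiffAt (etaP_contDiff _).contDiffAt, etaP_deriv (aseq_pos n), lap_const_sub]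
      ring
    · rw [indicator_of_notMem hz, indicator_of_notMem hz, lap_congr (hF0 n z (fun h => hz (hcb h)))]
      simp [lap]
  have hd0 : ∀ n z, 0 ≤ d n z := by
    intro n z
    rw [hd]
    refine mul_nonneg (by norm_num) (indicator_nonneg (fun w _ => ?_) z)
    exact mul_nonneg (etaP_deriv2_nonneg (aseq_pos n) _) (by positivity)
  have hsti : ∀ n, Integrable (st n) := fun n =>
    ((hst_int0 n).integrable_of_hasCompactSupport (hcs_lap hUc).mul_left).indicator measurableSet_ball
  have hdi : ∀ n, Integrable (d n) := fun n =>
    (((cont_lap (hFC n)).integrable_of_hasCompactSupport (hcs_lap (hFc n))).add (hsti n)).const_mul _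
  have hdK : ∀ n, ∀ z ∉ closedBall (0:ℂ) R, d n z = 0 := by
    intro n z hz
    simp only [d, st]
    rw [lap_congr (hF0 n z hz)]
    have h1 : lap (fun _ => (0:ℝ)) z = 0 := by simp [lap]
    rw [h1]
    by_cases hz1 : z ∈ ball (0:ℂ) R1
    · rw [indicator_of_mem hz1, Real.smoothTransition.zero_of_nonpos
        (mul_nonpos_of_nonneg_of_nonpos (aseq_pos n).le (hge z hz1 hz))]; simp
    · rw [indicator_of_notMem hz1]; simp
  -- the limit set
  set S := {z | z ∈ ball (0:ℂ) 1 ∧ u z < r} with hSd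
  have hS : S = {z | z ∈ ball (0:ℂ) R1 ∧ U z < r} := by
    ext z
    constructor
    · rintro ⟨h1, h2⟩
      have h3 := hcb (hK z h1 h2)
      exact ⟨h3, by rw [hUu z h3]; exact h2⟩
    · rintro ⟨h1, h2⟩
      exact ⟨hbb h1, by rw [← hUu z h1]; exact h2⟩
  have hSm : MeasurableSet S := by
    rw [hS]
    exact (isOpen_ball.inter (isOpen_lt hU.continuous continuous_const)).measurableSet
  have hlim : ∀ φ : ℂ → ℝ, ContDiff ℝ 2 φ → HasCompactSupport φ →
      Tendsto (fun n => ∫ z, φ z * d n z) atTop (𝓝 ((4:ℝ)⁻¹ * ∫ z in S,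
        ((r - u z) * lap φ z + φ z * lap u z))) := by
    intro φ hφ hφc
    have i1 : Integrable (fun z => (r - U z) * lap φ z) :=
      (hgc.continuous.mul (cont_lap hφ)).integrable_of_hasCompactSupport (hcs_lap hφc).mul_left
    have i2 : Integrable (fun z => φ z * lap U z) :=
      (hφ.continuous.mul (cont_lap hU)).integrable_of_hasCompactSupport hφc.mul_right
    have e1 : ∀ n, ∫ z, φ z * d n z = (4:ℝ)⁻¹ * ((∫ z, F n z * lap φ z) + ∫ z, φ z * st n z) := by
      intro n
      rw [ibp (hFC n) hφ (hFc n), ← integral_add, ← integral_const_mul]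
      · congr 1; ext z; simp only [d]; ring
      · exact (hφ.continuous.mul (cont_lap (hFC n))).integrable_of_hasCompactSupport hφc.mul_right
      · obtain ⟨C, hC⟩ := hφ.continuous.bounded_above_of_compact_support hφc
        exact (hsti n).bdd_mul hφ.continuous.aestronglyMeasurable (Eventually.of_forall hC)
    simp_rw [e1]
    have e2 : ∫ z in S, ((r - u z) * lap φ z + φ z * lap u z) =
        (∫ z, S.indicator (fun z => (r - U z) * lap φ z) z) + ∫ z, S.indicator (fun z => φ z * lap U z) z := by
      rw [integral_indicator hSm, integral_indicator hSm, ← integral_add i1.integrableOn i2.integrableOn]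
      refine setIntegral_congr_fun hSm fun z hz => ?_
      rw [hS] at hz
      have : lap u z = lap U z := by
        apply lap_congr
        filter_upwards [isOpen_ball.mem_nhds hz.1] with w hw
        exact (hUu w hw).symm
      rw [this, hUu z hz.1]
    rw [e2]
    refine (Tendsto.add ?_ ?_).const_mul _
    · refine tendsto_integral_of_dominated_convergence (fun z => ‖(r - U z) * lap φ z‖) ?_ i1.norm ?_ ?_
      · intro n; exact ((hFC n).continuous.mul (cont_lap hφ)).aestronglyMeasurable
      · intro n
        refine Eventually.of_forall fun z => ?_
        rw [norm_mul, norm_mul]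
        refine mul_le_mul_of_nonneg_right ?_ (norm_nonneg _)
        simp only [F]
        refine (norm_indicator_le_norm_self _ _).trans ?_
        exact etaP_abs_le (aseq_pos n) _
      · refine Eventually.of_forall fun z => ?_
        by_cases hz : z ∈ ball (0:ℂ) R1
        · have h1 := (etaP_tendsto (r - U z)).mul_const (lap φ z)
          have h2 : S.indicator (fun z => (r - U z) * lap φ z) z = max (r - U z) 0 * lap φ z := by
            by_cases h : U z < r
            · have hzS : z ∈ S := by rw [hS]; exact ⟨hz, h⟩
              rw [indicator_of_mem hzS, max_eq_left (by linarith)]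
            · have hzS : z ∉ S := by rw [hS]; exact fun hh => h hh.2
              rw [indicator_of_notMem hzS, max_eq_right (by linarith)]; simp
          rw [h2]
          simpa only [F, indicator_of_mem hz] using h1
        · have hzS : z ∉ S := by rw [hS]; exact fun hh => hz hh.1
          simp only [F, indicator_of_notMem hz, indicator_of_notMem hzS, zero_mul]
          exact tendsto_const_nhds
    · refine tendsto_integral_of_dominated_convergence (fun z => ‖φ z * lap U z‖) ?_ i2.norm ?_ ?_
      · intro n; exact hφ.continuous.aestronglyMeasurable.mul (hsti n).aestronglyMeasurable
      · intro n
        refine Eventually.of_forall fun z => ?_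
        rw [norm_mul, norm_mul]
        refine mul_le_mul_of_nonneg_left ?_ (norm_nonneg _)
        simp only [st]
        refine (norm_indicator_le_norm_self _ _).trans ?_
        rw [norm_mul]
        refine mul_le_of_le_one_left (norm_nonneg _) ?_
        rw [Real.norm_of_nonneg (Real.smoothTransition.nonneg _)]
        exact Real.smoothTransition.le_one _
      · refine Eventually.of_forall fun z => ?_
        by_cases hz : z ∈ ball (0:ℂ) R1
        · have h1 := ((st_tendsto (r - U z)).mul_const (lap U z)).const_mul (φ z)
          have h2 : S.indicator (fun z => φ z * lap U z) z = φ z * ((if 0 < r - U z then 1 else 0) * lap U z) := by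
            by_cases h : U z < r
            · have hzS : z ∈ S := by rw [hS]; exact ⟨hz, h⟩
              rw [indicator_of_mem hzS, if_pos (by linarith)]; simp
            · have hzS : z ∉ S := by rw [hS]; exact fun hh => h hh.2
              rw [indicator_of_notMem hzS, if_neg (by linarith)]; simp
          rw [h2]
          simpa only [st, indicator_of_mem hz] using h1
        · have hzS : z ∉ S := by rw [hS]; exact fun hh => hz hh.1
          simp only [st, indicator_of_notMem hz, indicator_of_notMem hzS, mul_zero]
          exact tendsto_const_nhds
  -- mass bound
  obtain ⟨χ, hχ, hχc, -, hχ1⟩ := globalize (g := fun _ => 1) contDiffOn_const (R := R1) (by linarith) hR11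
  have hmass : ∀ n, ∫ z, χ z * d n z = ∫ z, d n z := by
    intro n
    congr 1; ext z
    by_cases hz : z ∈ closedBall (0:ℂ) R
    · rw [hχ1 z (hcb hz), one_mul]
    · rw [hdK n z hz, mul_zero]
  have hbd := (hlim χ hχ hχc).bddAbove_range
  obtain ⟨B, hB⟩ := hbd
  obtain ⟨σ, h1, h2, h3⟩ := weak_limit d hd0 hdi (closedBall 0 R) (isCompact_closedBall 0 R) hdK B
    (fun n => by rw [← hmass]; exact hB ⟨n, rfl⟩)
  exact ⟨σ, h1, h2, fun φ hφ hφc => h3 φ hφ.continuous hφc _ (hlim φ hφ hφc)⟩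


def quad (c b k : ℝ) (z : ℂ) : ℝ := c + b * z.re + k * (z.re ^ 2 + z.im ^ 2)

lemma quad_contDiff (c b k : ℝ) : ContDiff ℝ 2 (quad c b k) := by
  have h1 : ContDiff ℝ 2 (fun z : ℂ => z.re) := reCLM.contDiff
  have h2 : ContDiff ℝ 2 (fun z : ℂ => z.im) := imCLM.contDiff
  unfold quad
  exact (contDiff_const.add (contDiff_const.mul h1)).add (contDiff_const.mul ((h1.pow 2).add (h2.pow 2)))

lemma quad_fderiv (c b k : ℝ) (z e : ℂ) :
    fderiv ℝ (quad c b k) z e = b * e.re + 2 * k * (z.re * e.re + z.im * e.im) := by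
  have h1 : HasFDerivAt (fun z : ℂ => z.re) reCLM z := reCLM.hasFDerivAt
  have h2 : HasFDerivAt (fun z : ℂ => z.im) imCLM z := imCLM.hasFDerivAt
  have h3 := ((h1.const_mul b).const_add c).add (((h1.pow 2).add (h2.pow 2)).const_mul k)
  have h4 := h3.fderiv
  change fderiv ℝ ((fun z : ℂ => c + b * z.re) + fun z : ℂ => k * (z.re ^ 2 + z.im ^ 2)) z e = _
  have h5 : fderiv ℝ ((fun z : ℂ => c + b * z.re) + fun z : ℂ => k * (z.re ^ 2 + z.im ^ 2)) z = _ := h4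
  rw [h5]
  simp
  ring

lemma quad_lap (c b k : ℝ) (z : ℂ) : lap (quad c b k) z = 4 * k := by
  have key : ∀ e : ℂ, fderiv ℝ (fun w => fderiv ℝ (quad c b k) w e) z e = 2 * k * (e.re ^ 2 + e.im ^ 2) := by
    intro e
    have : (fun w => fderiv ℝ (quad c b k) w e) = fun w => b * e.re + 2 * k * (w.re * e.re + w.im * e.im) := by
      ext w; exact quad_fderiv c b k w e
    rw [this]
    have h1 : HasFDerivAt (fun z : ℂ => z.re) reCLM z := reCLM.hasFDerivAt
    have h2 : HasFDerivAt (fun z : ℂ => z.im) imCLM z := imCLM.hasFDerivAt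
    have h3 := ((((h1.mul_const e.re).add (h2.mul_const e.im)).const_mul (2*k)).const_add (b * e.re)).fderiv
    have h5 : fderiv ℝ (fun w : ℂ => b * e.re + 2 * k * (w.re * e.re + w.im * e.im)) z = _ := h3
    rw [h5]
    simp
    ring
  unfold lap
  rw [key, key]; simp; ring

abbrev Af : ℂ → ℝ := quad 1 0 (-1)
abbrev Nf : ℂ → ℝ := quad 1 (-2) 1

lemma Af_eq (z : ℂ) : Af z = 1 - ‖z‖ ^ 2 := by
  rw [← normSq_eq_norm_sq, normSq_apply]; simp only [Af, quad]; ring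
lemma Nf_eq (z : ℂ) : Nf z = ‖1 - z‖ ^ 2 := by
  rw [← normSq_eq_norm_sq, normSq_apply]; simp only [Nf, quad, sub_re, sub_im, one_re, one_im]; ring

def uf (z : ℂ) : ℝ := - (Af z * (Nf z) ^ (-(1/4):ℝ))

lemma norm_lt_of_mem {z : ℂ} (hz : z ∈ ball (0:ℂ) 1) : ‖z‖ < 1 := by simpa using hz

lemma one_sub_norm_le (z : ℂ) : 1 - ‖z‖ ≤ ‖1 - z‖ := by
  have := norm_sub_norm_le (1:ℂ) z
  simpa using this

lemma Af_pos {z : ℂ} (hz : z ∈ ball (0:ℂ) 1) : 0 < Af z := by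
  rw [Af_eq]; have := norm_lt_of_mem hz; nlinarith [norm_nonneg z]

lemma norm_pos' {z : ℂ} (hz : z ∈ ball (0:ℂ) 1) : 0 < ‖1 - z‖ := by
  linarith [one_sub_norm_le z, norm_lt_of_mem hz]

lemma Nf_pos {z : ℂ} (hz : z ∈ ball (0:ℂ) 1) : 0 < Nf z := by
  rw [Nf_eq]; have := norm_pos' hz; positivity

lemma Nf_le {z : ℂ} (hz : z ∈ ball (0:ℂ) 1) : Nf z ≤ 4 := by
  rw [Nf_eq]
  have : ‖1 - z‖ ≤ 1 + ‖z‖ := by simpa using norm_sub_le (1:ℂ) z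
  have := norm_lt_of_mem hz
  nlinarith [norm_nonneg (1 - z)]

lemma uf_contDiffAt {z : ℂ} (hz : z ∈ ball (0:ℂ) 1) : ContDiffAt ℝ 2 uf z := by
  unfold uf
  exact ((quad_contDiff _ _ _).contDiffAt.mul
    ((quad_contDiff _ _ _).contDiffAt.rpow_const_of_ne (Nf_pos hz).ne')).neg

lemma uf_contDiffOn : ContDiffOn ℝ 2 uf (ball 0 1) := fun _ hz => (uf_contDiffAt hz).contDiffWithinAt

lemma uf_lap {z : ℂ} (hz : z ∈ ball (0:ℂ) 1) :
    lap uf z = 3 * (Nf z) ^ (-(1/4):ℝ) + 3/4 * Af z * (Nf z) ^ (-(5/4):ℝ) := by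
  have hN := Nf_pos hz
  have h0 : lap uf z = - lap (fun z => Af z * (Nf z) ^ (-(1/4):ℝ)) z := by
    have := lap_const_sub (U := fun z => Af z * (Nf z) ^ (-(1/4):ℝ)) 0 z
    rw [← this]; congr 1; ext w; simp [uf]
  have hη : ContDiffAt ℝ 2 (fun t : ℝ => t ^ (-(1/4):ℝ)) (Nf z) :=
    Real.contDiffAt_rpow_const_of_ne hN.ne'
  have hNd : ContDiffAt ℝ 2 (fun z => (Nf z) ^ (-(1/4):ℝ)) z :=
    (quad_contDiff _ _ _).contDiffAt.rpow_const_of_ne hN.ne'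
  have hd1 : ∀ t : ℝ, 0 < t → deriv (fun t : ℝ => t ^ (-(1/4):ℝ)) t = (-(1/4)) * t ^ (-(5/4):ℝ) := by
    intro t ht
    rw [Real.deriv_rpow_const]; norm_num
  have hd2 : deriv (deriv (fun t : ℝ => t ^ (-(1/4):ℝ))) (Nf z) = (5/16) * (Nf z) ^ (-(9/4):ℝ) := by
    have : deriv (fun t : ℝ => t ^ (-(1/4):ℝ)) =ᶠ[𝓝 (Nf z)] fun t => (-(1/4)) * t ^ (-(5/4):ℝ) := by
      filter_upwards [Ioi_mem_nhds hN] with t ht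
      exact hd1 t ht
    rw [this.deriv_eq]
    have h := (Real.hasDerivAt_rpow_const (x := Nf z) (p := (-(5/4):ℝ)) (Or.inl hN.ne')).const_mul (-(1/4))
    rw [h.deriv]
    rw [show (-(5/4) - 1 : ℝ) = -(9/4) by norm_num]; ring
  have hgrad : ∀ e, fderiv ℝ (fun z => (Nf z) ^ (-(1/4):ℝ)) z e =
      (-(1/4)) * (Nf z) ^ (-(5/4):ℝ) * fderiv ℝ Nf z e := by
    intro e
    have h1 := (hη.differentiableAt (by norm_num)).hasDerivAt
    have h2 := ((quad_contDiff 1 (-2) 1).differentiable (by norm_num) z).hasFDerivAt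
    have h3 := (h1.comp_hasFDerivAt z h2).fderiv
    change fderiv ℝ ((fun t : ℝ => t ^ (-(1/4):ℝ)) ∘ Nf) z e = _
    rw [h3, hd1 _ hN]; simp
  have h94 : (Nf z) ^ (-(5/4):ℝ) = Nf z * (Nf z) ^ (-(9/4):ℝ) := by
    rw [← Real.rpow_one_add' hN.le (by norm_num)]; norm_num
  have h54 : (Nf z) ^ (-(1/4):ℝ) = Nf z * (Nf z) ^ (-(5/4):ℝ) := by
    rw [← Real.rpow_one_add' hN.le (by norm_num)]; norm_num
  rw [h0, lap_mul (quad_contDiff _ _ _).contDiffAt hNd, hgrad, hgrad,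
    lap_comp (quad_contDiff _ _ _).contDiffAt hη, hd2, hd1 _ hN]
  simp only [Af, Nf, quad_fderiv, quad_lap] at *
  rw [h54, h94]
  simp
  generalize (quad 1 (-2) 1 z) ^ (-(9/4):ℝ) = q
  simp only [quad]
  ring

lemma uf_lap_ge {z : ℂ} (hz : z ∈ ball (0:ℂ) 1) : 2 ≤ lap uf z := by
  rw [uf_lap hz]
  have h1 : (4:ℝ) ^ (-(1/4):ℝ) ≤ (Nf z) ^ (-(1/4):ℝ) :=
    Real.rpow_le_rpow_of_nonpos (Nf_pos hz) (Nf_le hz) (by norm_num)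
  have h2 : (2/3:ℝ) ≤ (4:ℝ) ^ (-(1/4):ℝ) := by
    rw [show (4:ℝ)^(-(1/4):ℝ) = ((2:ℝ)^(2:ℝ))^(-(1/4):ℝ) by norm_num, ← Real.rpow_mul (by norm_num)]
    rw [show (2 * (-(1/4)) : ℝ) = -(1/2) by norm_num, Real.rpow_neg (by norm_num), ← Real.sqrt_eq_rpow]
    rw [le_inv_comm₀ (by norm_num) (by positivity)]
    rw [Real.sqrt_le_left (by norm_num)]; norm_num
  have h3 : 0 ≤ 3/4 * Af z * (Nf z) ^ (-(5/4):ℝ) :=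
    mul_nonneg (mul_nonneg (by norm_num) (Af_pos hz).le) (Real.rpow_nonneg (Nf_pos hz).le _)
  linarith

lemma uf_neg {z : ℂ} (hz : z ∈ ball (0:ℂ) 1) : uf z < 0 := by
  unfold uf
  have := mul_pos (Af_pos hz) (Real.rpow_pos_of_pos (Nf_pos hz) (-(1/4)))
  linarith

lemma uf_le {z : ℂ} (hz : z ∈ ball (0:ℂ) 1) : uf z ≤ - (1 - ‖z‖^2) / 2 := by
  unfold uf
  have h1 : (4:ℝ) ^ (-(1/4):ℝ) ≤ (Nf z) ^ (-(1/4):ℝ) :=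
    Real.rpow_le_rpow_of_nonpos (Nf_pos hz) (Nf_le hz) (by norm_num)
  have h2 : (1/2:ℝ) ≤ (4:ℝ) ^ (-(1/4):ℝ) := by
    calc (1/2:ℝ) = 4 ^ (-(1/2):ℝ) := by
          rw [show (4:ℝ) = 2^(2:ℝ) by norm_num, ← Real.rpow_mul (by norm_num)]
          rw [show (2 * (-(1/2)) : ℝ) = -1 by norm_num, Real.rpow_neg_one]; norm_num
      _ ≤ _ := Real.rpow_le_rpow_of_exponent_le (by norm_num) (by norm_num)
  have h3 := mul_le_mul_of_nonneg_left (h2.trans h1) (Af_pos hz).le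
  rw [Af_eq] at *
  linarith

/-- sublevel sets -/
lemma uf_sub {z : ℂ} (hz : z ∈ ball (0:ℂ) 1) {c : ℝ} (hc : c < 0) (h : uf z < c) :
    ‖z‖ ≤ 1 - min (c^2/4) (1/2) := by
  have hz1 := norm_lt_of_mem hz
  have hm := one_sub_norm_le z
  have h1 : (Nf z) ^ (-(1/4):ℝ) = (Real.sqrt ‖1 - z‖)⁻¹ := by
    rw [Nf_eq, ← Real.rpow_natCast, ← Real.rpow_mul (norm_nonneg _), Real.sqrt_eq_rpow, ← Real.rpow_neg (norm_nonneg _)]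
    norm_num
  unfold uf at h
  rw [h1, Af_eq] at h
  have hs : Real.sqrt (1 - ‖z‖) ≤ Real.sqrt ‖1 - z‖ := Real.sqrt_le_sqrt hm
  have hsp : 0 < Real.sqrt (1 - ‖z‖) := Real.sqrt_pos.2 (by linarith)
  have hsq := Real.sq_sqrt (show 0 ≤ 1 - ‖z‖ by linarith)
  set s := Real.sqrt (1 - ‖z‖)
  have h2 : (Real.sqrt ‖1 - z‖)⁻¹ ≤ s⁻¹ := inv_anti₀ hsp hs
  have h3 : (1 - ‖z‖^2) * (Real.sqrt ‖1 - z‖)⁻¹ ≤ 2 * s := by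
    calc (1 - ‖z‖^2) * (Real.sqrt ‖1 - z‖)⁻¹ ≤ (2 * s^2) * s⁻¹ := by
          refine mul_le_mul ?_ h2 (by positivity) (by positivity)
          rw [hsq]; nlinarith [norm_nonneg z]
      _ = 2 * s := by field_simp
  have h4 : c^2/4 ≤ s^2 := by nlinarith
  rw [hsq] at h4
  have := min_le_left (c^2/4) (1/2)
  linarith

lemma min_facts {c : ℝ} (hc : c < 0) : 0 < 1 - min (c^2/4) (1/2) ∧ 1 - min (c^2/4) (1/2) < 1 := by
  have h1 := min_le_right (c^2/4) (1/2)
  have h2 : 0 < min (c^2/4) (1/2:ℝ) := lt_min (by nlinarith) (by norm_num)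
  constructor <;> linarith

/-- weighted AM-GM support -/
lemma amgm {A P A0 P0 : ℝ} (hA : 0 < A) (hP : 0 < P) (hA0 : 0 < A0) (hP0 : 0 < P0) :
    A ^ (3/4:ℝ) * P ^ (1/4:ℝ) ≤ (A0 ^ (3/4:ℝ) * P0 ^ (1/4:ℝ)) * (3/4 * (A / A0) + 1/4 * (P / P0)) := by
  have := Real.geom_mean_le_arith_mean2_weighted (w₁ := 3/4) (w₂ := 1/4) (by norm_num) (by norm_num)
    (div_pos hA hA0).le (div_pos hP hP0).le (by norm_num)
  rw [Real.div_rpow hA.le hA0.le, Real.div_rpow hP.le hP0.le] at this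
  have h1 := Real.rpow_pos_of_pos hA0 (3/4)
  have h2 := Real.rpow_pos_of_pos hP0 (1/4)
  calc A ^ (3/4:ℝ) * P ^ (1/4:ℝ) = (A0 ^ (3/4:ℝ) * P0 ^ (1/4:ℝ)) *
        (A ^ (3/4:ℝ) / A0 ^ (3/4:ℝ) * (P ^ (1/4:ℝ) / P0 ^ (1/4:ℝ))) := by field_simp
    _ ≤ _ := by gcongr


lemma uf_eq_gm {w : ℂ} (hw : w ∈ ball (0:ℂ) 1) :
    uf w = - ((Af w) ^ (3/4:ℝ) * (Af w / Nf w) ^ (1/4:ℝ)) := by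
  have hA := Af_pos hw
  have hN := Nf_pos hw
  unfold uf
  rw [Real.div_rpow hA.le hN.le, Real.rpow_neg hN.le, mul_div_assoc', ← Real.rpow_add hA]
  norm_num
  rfl

lemma re_cayley {w : ℂ} (hw : w ∈ ball (0:ℂ) 1) : ((1 + w) / (1 - w)).re = Af w / Nf w := by
  have hN := Nf_pos hw
  have h1 : normSq (1 - w) = Nf w := by rw [Nf_eq, normSq_eq_norm_sq]
  rw [div_re, h1]
  field_simp
  simp [Af, quad]
  ring

lemma uf_submean {z0 : ℂ} {r : ℝ} (hr : 0 < r) (hz : z0 ∈ ball (0:ℂ) 1) (hb : closedBall z0 r ⊆ ball (0:ℂ) 1) :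
    uf z0 ≤ (2 * Real.pi)⁻¹ *
      ∫ t in (0:ℝ)..(2 * Real.pi), uf (z0 + (r : ℂ) * Complex.exp ((t : ℂ) * Complex.I)) := by
  have hA0 := Af_pos hz
  have hN0 := Nf_pos hz
  have hP0 : 0 < Af z0 / Nf z0 := div_pos hA0 hN0
  set C := (Af z0) ^ (3/4:ℝ) * (Af z0 / Nf z0) ^ (1/4:ℝ) with hC
  have hC0 : 0 < C := by positivity
  let α : ℝ := C * (3/4) / Af z0
  let β : ℝ := C * (1/4) / (Af z0 / Nf z0)
  have hα : 0 < α := by positivity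
  let H : ℂ → ℂ := fun z => (α : ℂ) * ((1 - ‖z0‖^2 - r^2 : ℝ) - 2 * (starRingEnd ℂ z0) * (z - z0)) + (β : ℂ) * ((1 + z) / (1 - z))
  have hcirc : ∀ t : ℝ, z0 + (r : ℂ) * Complex.exp ((t : ℂ) * Complex.I) = circleMap z0 r t := fun t => rfl
  have hmem : ∀ t : ℝ, circleMap z0 r t ∈ ball (0:ℂ) 1 := fun t =>
    hb (sphere_subset_closedBall (circleMap_mem_sphere z0 hr.le t))
  have hHd : ∀ z ∈ ball (0:ℂ) 1, DifferentiableAt ℂ H z := by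
    intro z hz
    have : 1 - z ≠ 0 := by
      have := norm_pos' hz
      exact norm_pos_iff.1 this
    exact (((differentiableAt_const _).sub ((differentiableAt_id.sub_const z0).const_mul _)).const_mul _).add
      ((((differentiableAt_const _).add differentiableAt_id).div
        ((differentiableAt_const _).sub differentiableAt_id) this).const_mul _)
  have hHc : ContinuousOn H (closedBall z0 r) := fun z hz => (hHd z (hb hz)).continuousAt.continuousWithinAt
  have hmean : Real.circleAverage H z0 r = H z0 := by
    refine circleAverage_of_differentiable_on_off_countable (s := ∅) countable_empty ?_ ?_
    · rwa [abs_of_pos hr]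
    · rw [abs_of_pos hr]
      intro z hz
      exact hHd z (hb (ball_subset_closedBall hz.1))
  have hcont : Continuous (fun t : ℝ => H (circleMap z0 r t)) :=
    hHc.comp_continuous (continuous_circleMap z0 r)
      (fun t => sphere_subset_closedBall (circleMap_mem_sphere z0 hr.le t))
  have hcr : CircleIntegrable H z0 r := hcont.intervalIntegrable _ _
  have hre : (2 * Real.pi)⁻¹ * ∫ t in (0:ℝ)..(2 * Real.pi), (H (circleMap z0 r t)).re = (H z0).re := by
    have := reCLM.circleAverage_comp_comm hcr
    rw [hmean] at this
    simpa [Real.circleAverage_def] using this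
  have huc : Continuous (fun t : ℝ => uf (circleMap z0 r t)) :=
    uf_contDiffOn.continuousOn.comp_continuous (continuous_circleMap z0 r) hmem
  have hpt : ∀ t : ℝ, - (H (circleMap z0 r t)).re ≤ uf (circleMap z0 r t) := by
    intro t
    set w := circleMap z0 r t with hw
    have hwm := hmem t
    rw [← hw] at hwm
    rw [uf_eq_gm hwm]
    have h1 := amgm (Af_pos hwm) (div_pos (Af_pos hwm) (Nf_pos hwm)) hA0 hP0
    have h2 : (H w).re = α * Af w + β * (Af w / Nf w) := by
      have hwn : normSq (w - z0) = r^2 := by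
        have : ‖w - z0‖ = r := by
          have := circleMap_mem_sphere z0 hr.le t
          rw [mem_sphere, dist_eq_norm] at this
          exact this
        rw [normSq_eq_norm_sq, this]
      have h3 : 1 - ‖z0‖^2 - r^2 - 2 * (z0.re * (w.re - z0.re) + z0.im * (w.im - z0.im)) = Af w := by
        rw [← normSq_eq_norm_sq, normSq_apply, ← hwn, normSq_apply]
        simp [Af, quad]; ring
      simp only [H, add_re, re_ofReal_mul, re_cayley hwm]
      rw [← h3]
      rw [sub_re, ofReal_re]
      simp
      left; ring
    rw [h2]
    have h3 : C * (3/4 * (Af w / Af z0) + 1/4 * (Af w / Nf w / (Af z0 / Nf z0))) =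
       α * Af w + β * (Af w / Nf w) := by simp only [α, β]; ring
    rw [← h3]
    linarith
  have hH0 : - (H z0).re = uf z0 + α * r^2 := by
    rw [uf_eq_gm hz, ← hC]
    simp only [H, add_re, re_ofReal_mul, re_cayley hz]
    have h3 : 1 - ‖z0‖^2 = Af z0 := (Af_eq z0).symm
    rw [h3, sub_re, ofReal_re]
    simp only [sub_self, mul_zero, zero_re, sub_zero]
    have e1 : α * Af z0 = C * (3/4) := by simp only [α]; field_simp
    have e2 : β * (Af z0 / Nf z0) = C * (1/4) := by simp only [β]; field_simp
    rw [e2, mul_sub, e1]; ring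
  have hmono := intervalIntegral.integral_mono_on (μ := volume) (a := 0) (b := 2 * Real.pi) (by positivity)
    ((continuous_re.comp hcont).neg.intervalIntegrable _ _) (huc.intervalIntegrable _ _) (fun t _ => hpt t)
  simp_rw [hcirc]
  calc uf z0 ≤ - (H z0).re := by rw [hH0]; nlinarith [sq_nonneg r]
    _ = (2 * Real.pi)⁻¹ * ∫ t in (0:ℝ)..(2 * Real.pi), - (H (circleMap z0 r t)).re := by
        rw [intervalIntegral.integral_neg, ← hre]; ring
    _ ≤ _ := by
        refine mul_le_mul_of_nonneg_left ?_ (by positivity)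
        simpa using hmono

lemma uf_exhaustion : IsExhaustion uf (ball (0:ℂ) 1) where
  neg := fun z hz => uf_neg hz
  subh := ⟨uf_contDiffOn.continuousOn, fun z hz r hr hb => uf_submean hr hz hb⟩
  exh := by
    intro c hc
    have hsub : {z | z ∈ ball (0:ℂ) 1 ∧ uf z < c} ⊆ closedBall 0 (1 - min (c^2/4) (1/2)) := by
      rintro z ⟨h1, h2⟩
      simpa using uf_sub h1 hc h2
    have h2 := closure_minimal hsub isClosed_closedBall
    exact ⟨(isCompact_closedBall _ _).of_isClosed_subset isClosed_closure h2,
      h2.trans (closedBall_subset_ball (min_facts hc).2)⟩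

def dens (z : ℂ) : ℝ := (3 * (Nf z) ^ (-(1/4):ℝ) + 3/4 * Af z * (Nf z) ^ (-(5/4):ℝ)) / 4

lemma dens_eq {z : ℂ} (hz : z ∈ ball (0:ℂ) 1) : dens z = lap uf z / 4 := by
  rw [uf_lap hz]; rfl

lemma dens_nonneg {z : ℂ} (hz : z ∈ ball (0:ℂ) 1) : 0 ≤ dens z := by
  rw [dens_eq hz]; linarith [uf_lap_ge hz]

lemma dens_meas : Measurable dens := by
  have h1 : Measurable Af := (quad_contDiff _ _ _).continuous.measurable
  have h2 : Measurable Nf := (quad_contDiff _ _ _).continuous.measurable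
  unfold dens
  fun_prop

lemma pow_integrable {s : ℝ} (hs : s < 2) :
    IntegrableOn (fun z : ℂ => ‖1 - z‖ ^ (-s)) (ball 0 1) := by
  have h1 : IntegrableOn (fun z : ℂ => ‖z‖ ^ (-s)) (ball 0 2) := by
    rw [integrableOn_fun_norm_addHaar (μ := (volume : Measure ℂ)) (f := fun x => x ^ (-s))]
    have : IntegrableOn (fun y : ℝ => y ^ (1 - s)) (Ioo 0 2) := by
      rw [← integrableOn_Ioc_iff_integrableOn_Ioo, ← intervalIntegrable_iff_integrableOn_Ioc_of_le (by norm_num)]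
      exact intervalIntegral.intervalIntegrable_rpow' (by linarith)
    refine this.congr_fun ?_ measurableSet_Ioo
    intro y hy
    simp only [Complex.finrank_real_complex, smul_eq_mul]
    rw [sub_eq_add_neg, Real.rpow_add hy.1]
    simp
  rw [← integrable_indicator_iff measurableSet_ball] at h1
  have h2 := h1.comp_sub_left 1
  refine (h2.integrableOn (s := ball (0:ℂ) 1)).congr_fun ?_ measurableSet_ball
  intro z hz
  have : 1 - z ∈ ball (0:ℂ) 2 := by
    rw [mem_ball_zero_iff]
    have h3 : ‖1 - z‖ ≤ 1 + ‖z‖ := by simpa using norm_sub_le (1:ℂ) z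
    linarith [norm_lt_of_mem hz]
  simp only [indicator_of_mem this]

lemma dens_integrable : IntegrableOn dens (ball 0 1) := by
  have h1 := ((pow_integrable (s := 1/2) (by norm_num)).add (pow_integrable (s := 3/2) (by norm_num)))
  refine Integrable.mono' h1 dens_meas.aestronglyMeasurable ?_
  refine (ae_restrict_mem measurableSet_ball).mono fun z hz => ?_
  rw [Real.norm_of_nonneg (dens_nonneg hz)]
  have hp := norm_pos' hz
  have e1 : (Nf z) ^ (-(1/4):ℝ) = ‖1 - z‖ ^ (-(1/2):ℝ) := by
    rw [Nf_eq, ← Real.rpow_natCast, ← Real.rpow_mul hp.le]; norm_num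
  have e2 : (Nf z) ^ (-(5/4):ℝ) = ‖1 - z‖ ^ (-(5/2):ℝ) := by
    rw [Nf_eq, ← Real.rpow_natCast, ← Real.rpow_mul hp.le]; norm_num
  have e3 : ‖1 - z‖ * ‖1 - z‖ ^ (-(5/2):ℝ) = ‖1 - z‖ ^ (-(3/2):ℝ) := by
    rw [← Real.rpow_one_add' hp.le (by norm_num)]; norm_num
  have hA : Af z ≤ 2 * ‖1 - z‖ := by
    rw [Af_eq]
    have := one_sub_norm_le z
    have := norm_lt_of_mem hz
    nlinarith [norm_nonneg z]
  have h4 : Af z * ‖1 - z‖ ^ (-(5/2):ℝ) ≤ 2 * ‖1 - z‖ ^ (-(3/2):ℝ) := by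
    rw [← e3, ← mul_assoc]
    exact mul_le_mul_of_nonneg_right hA (Real.rpow_nonneg hp.le _)
  unfold dens
  rw [e1, e2]
  have h5 := Real.rpow_nonneg hp.le (-(1/2))
  have h6 := Real.rpow_nonneg hp.le (-(3/2))
  simp only [Pi.add_apply]
  nlinarith

def nuf : Measure ℂ := (volume.restrict (ball (0:ℂ) 1)).withDensity (fun z => ENNReal.ofReal (dens z))

instance nuf_finite : IsFiniteMeasure nuf := by
  unfold nuf
  exact isFiniteMeasure_withDensity_ofReal dens_integrable.2

lemma nuf_compl : nuf (ball (0:ℂ) 1)ᶜ = 0 := by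
  unfold nuf
  refine (withDensity_absolutelyContinuous _ _) ?_
  rw [Measure.restrict_apply measurableSet_ball.compl]; simp

lemma nuf_int (T : Set ℂ) (hT : MeasurableSet T) (φ : ℂ → ℝ) :
    ∫ z in T, φ z ∂nuf = ∫ z in T ∩ ball 0 1, φ z * lap uf z / 4 := by
  unfold nuf
  rw [restrict_withDensity hT, Measure.restrict_restrict hT,
    integral_withDensity_eq_integral_toReal_smul (by have := dens_meas; fun_prop) (by simp)]
  refine setIntegral_congr_fun (hT.inter measurableSet_ball) fun z hz => ?_
  simp only [smul_eq_mul]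
  rw [ENNReal.toReal_ofReal (dens_nonneg hz.2), dens_eq hz.2]
  ring

lemma nuf_riesz : IsRieszMeasure uf (ball (0:ℂ) 1) nuf := by
  refine ⟨nuf_compl, ?_⟩
  intro φ hφ hφc hφs
  obtain ⟨R, hR1, hR⟩ : ∃ R < 1, tsupport φ ⊆ ball (0:ℂ) R := exists_lt_subset_ball (isClosed_tsupport φ) hφs
  obtain ⟨U, hU, hUc, -, hUu⟩ := globalize uf_contDiffOn (R := max R (1/2)) (by positivity) (max_lt hR1 (by norm_num))
  have hsub : tsupport φ ⊆ ball (0:ℂ) (max R (1/2)) := hR.trans (ball_subset_ball (le_max_left _ _))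
  have h1 := nuf_int univ MeasurableSet.univ φ
  rw [Measure.restrict_univ, univ_inter] at h1
  rw [h1]
  have e1 : ∫ z in ball (0:ℂ) 1, φ z * lap uf z / 4 = (4:ℝ)⁻¹ * ∫ z, φ z * lap U z := by
    rw [← integral_const_mul, ← integral_indicator measurableSet_ball]
    congr 1; ext z
    by_cases hz : z ∈ tsupport φ
    · rw [indicator_of_mem (hφs hz), lap_congr (φ := U) (ψ := uf)]
      · ring
      · filter_upwards [isOpen_ball.mem_nhds (hsub hz)] with w hw using hUu w hw
    · have := image_eq_zero_of_notMem_tsupport hz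
      simp [indicator, this]
  have e2 : ∫ z in ball (0:ℂ) 1, uf z * lap φ z = ∫ z, U z * lap φ z := by
    rw [← integral_indicator measurableSet_ball]
    congr 1; ext z
    by_cases hz : z ∈ tsupport φ
    · rw [indicator_of_mem (hφs hz), hUu z (hsub hz)]
    · simp [indicator, supp_lap hz]
  rw [e1, e2, ibp hU hφ hUc]


lemma prod_cont {g h : ℂ → ℝ} (hg : ContinuousOn g (ball (0:ℂ) 1)) (hh : Continuous h)
    (hs : tsupport h ⊆ ball (0:ℂ) 1) : Continuous (fun z => g z * h z) := by
  refine continuous_of_tsupport (fun x hx => ?_)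
  have hx2 : x ∈ tsupport h := tsupport_mul_subset_right hx
  exact (hg.continuousAt (isOpen_ball.mem_nhds (hs hx2))).mul hh.continuousAt

lemma prod_int {g h : ℂ → ℝ} (hg : ContinuousOn g (ball (0:ℂ) 1)) (hh : Continuous h)
    (hc : HasCompactSupport h)
    (hs : tsupport h ⊆ ball (0:ℂ) 1) : Integrable (fun z => g z * h z) :=
  (prod_cont hg hh hs).integrable_of_hasCompactSupport hc.mul_left

lemma sig_ex {r : ℝ} (hr : r < 0) : ∃ σ : Measure ℂ, IsFiniteMeasure σ ∧
    σ (closedBall 0 (1 - min (r^2/4) (1/2)))ᶜ = 0 ∧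
    ∀ φ : ℂ → ℝ, ContDiff ℝ 2 φ → HasCompactSupport φ →
      ∫ z, φ z ∂σ = 4⁻¹ * ∫ z in {z | z ∈ ball (0:ℂ) 1 ∧ uf z < r}, ((r - uf z) * lap φ z + φ z * lap uf z) := by
  refine exists_sigma uf_contDiffOn ?_ (min_facts hr).2 ?_
  · have := min_le_right (r^2/4) (1/2:ℝ); linarith
  · intro z hz h
    simpa using uf_sub hz hr h

open Classical in
def sig (r : ℝ) : Measure ℂ := if h : r < 0 then Classical.choose (sig_ex h) else 0

lemma sig_spec {r : ℝ} (hr : r < 0) : IsFiniteMeasure (sig r) ∧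
    sig r (closedBall 0 (1 - min (r^2/4) (1/2)))ᶜ = 0 ∧
    ∀ φ : ℂ → ℝ, ContDiff ℝ 2 φ → HasCompactSupport φ →
      ∫ z, φ z ∂(sig r) = 4⁻¹ * ∫ z in {z | z ∈ ball (0:ℂ) 1 ∧ uf z < r}, ((r - uf z) * lap φ z + φ z * lap uf z) := by
  unfold sig
  rw [dif_pos hr]
  exact Classical.choose_spec (sig_ex hr)

lemma subl_meas (r : ℝ) : MeasurableSet {z | z ∈ ball (0:ℂ) 1 ∧ uf z < r} :=
  (uf_contDiffOn.continuousOn.isOpen_inter_preimage isOpen_ball isOpen_Iio).measurableSet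

lemma supl_meas (r : ℝ) : MeasurableSet {z | z ∈ ball (0:ℂ) 1 ∧ r ≤ uf z} := by
  have : {z | z ∈ ball (0:ℂ) 1 ∧ r ≤ uf z} = ball (0:ℂ) 1 \ {z | z ∈ ball (0:ℂ) 1 ∧ uf z < r} := by
    ext z; simp; tauto
  rw [this]
  exact measurableSet_ball.diff (subl_meas r)

lemma sig_MA {r : ℝ} (hr : r < 0) : IsMAMeasure uf (ball (0:ℂ) 1) nuf r (sig r) := by
  obtain ⟨hf, hs, hφ⟩ := sig_spec hr
  refine ⟨sig r + nuf.restrict {z | z ∈ ball (0:ℂ) 1 ∧ r ≤ uf z}, ⟨?_, ?_⟩, ?_⟩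
  · rw [Measure.add_apply, add_eq_zero]
    constructor
    · refine measure_mono_null (compl_subset_compl.2 ?_) hs
      exact closedBall_subset_ball (min_facts hr).2
    · exact le_antisymm ((Measure.restrict_apply_le _ _).trans nuf_compl.le) bot_le
  · intro φ h1 h2 h3
    have hB := subl_meas r
    have hC := supl_meas r
    set B := {z | z ∈ ball (0:ℂ) 1 ∧ uf z < r} with hBd
    set C := {z | z ∈ ball (0:ℂ) 1 ∧ r ≤ uf z} with hCd
    have hBC : B ∪ C = ball (0:ℂ) 1 := by
      ext z; simp only [hBd, hCd, mem_union, mem_ofPred_eq]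
      rcases lt_or_ge (uf z) r with h | h <;> simp [h]
    have hdis : Disjoint B C := by
      rw [Set.disjoint_left]; rintro z ⟨_, h⟩ ⟨_, h'⟩; exact absurd h (not_lt.2 h')
    have hil : Integrable (fun z => uf z * lap φ z) :=
      prod_int uf_contDiffOn.continuousOn (cont_lap h1) (hcs_lap h2)
        ((closure_minimal (fun z hz => by by_contra h; exact hz (supp_lap h)) (isClosed_tsupport φ)).trans h3)
    have him : Integrable (fun z => max (uf z) r * lap φ z) :=
      prod_int (g := fun z => max (uf z) r) (uf_contDiffOn.continuousOn.sup continuousOn_const) (cont_lap h1) (hcs_lap h2)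
        ((closure_minimal (fun z hz => by by_contra h; exact hz (supp_lap h)) (isClosed_tsupport φ)).trans h3)
    have hip : IntegrableOn (fun z => φ z * lap uf z) (ball (0:ℂ) 1) := by
      obtain ⟨M, hM⟩ := h2.exists_bound_of_continuous h1.continuous
      have := (dens_integrable.const_mul 4).bdd_mul (c := M) h1.continuous.aestronglyMeasurable (ae_of_all _ hM)
      refine Integrable.congr this ?_
      filter_upwards [ae_restrict_mem measurableSet_ball] with z hz
      rw [dens_eq hz]; ring
    have hsubB : B ⊆ ball (0:ℂ) 1 := fun z h => h.1
    have hsubC : C ⊆ ball (0:ℂ) 1 := fun z h => h.1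
    rw [integral_add_measure (h1.continuous.integrable_of_hasCompactSupport h2)
      (h1.continuous.integrable_of_hasCompactSupport h2), hφ φ h1 h2, nuf_int C hC φ]
    have hR := nuf_riesz.2 φ h1 h2 h3
    have hn := nuf_int univ MeasurableSet.univ φ
    rw [Measure.restrict_univ, univ_inter] at hn
    rw [hn, ← hBC, setIntegral_union hdis hC ((hip.mono_set hsubB).div_const 4) ((hip.mono_set hsubC).div_const 4),
      setIntegral_union hdis hC hil.integrableOn hil.integrableOn] at hR
    rw [inter_eq_left.2 hsubC, ← hBC, setIntegral_union hdis hC him.integrableOn him.integrableOn]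
    have e1 : ∫ z in B, max (uf z) r * lap φ z = ∫ z in B, r * lap φ z :=
      setIntegral_congr_fun hB fun z hz => by simp only [max_eq_right hz.2.le]
    have e2 : ∫ z in C, max (uf z) r * lap φ z = ∫ z in C, uf z * lap φ z :=
      setIntegral_congr_fun hC fun z hz => by simp only [max_eq_left hz.2]
    have hrl : IntegrableOn (fun z => r * lap φ z) B :=
      (((cont_lap h1).integrable_of_hasCompactSupport (hcs_lap h2)).const_mul r).integrableOn
    have e3 : ∫ z in B, ((r - uf z) * lap φ z + φ z * lap uf z) =
      (∫ z in B, r * lap φ z) - (∫ z in B, uf z * lap φ z) + ∫ z in B, φ z * lap uf z := by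
      rw [← integral_sub hrl hil.integrableOn, ← integral_add (f := fun z => r * lap φ z - uf z * lap φ z) (hrl.sub hil.integrableOn) (hip.mono_set hsubB)]
      congr 1; ext z; ring
    rw [e1, e2, e3]
    simp only [integral_div] at hR ⊢
    linarith
  · rw [Measure.add_sub_cancel]


def qf (f : ℂ → ℂ) (z : ℂ) : ℝ := 1 + ((f z).re ^ 2 + (f z).im ^ 2)
def psi (f : ℂ → ℂ) (z : ℂ) : ℝ := √(qf f z)

lemma qf_pos (f : ℂ → ℂ) (z : ℂ) : 0 < qf f z := by unfold qf; positivity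
lemma qf_eq (f : ℂ → ℂ) (z : ℂ) : qf f z = 1 + ‖f z‖ ^ 2 := by
  rw [← normSq_eq_norm_sq, normSq_apply]; unfold qf; ring
lemma psi_pos (f : ℂ → ℂ) (z : ℂ) : 0 < psi f z := Real.sqrt_pos.2 (qf_pos f z)
lemma psi_sq (f : ℂ → ℂ) (z : ℂ) : psi f z * psi f z = qf f z := Real.mul_self_sqrt (qf_pos f z).le
lemma norm_le_psi (f : ℂ → ℂ) (z : ℂ) : ‖f z‖ ≤ psi f z := by
  apply Real.le_sqrt_of_sq_le; rw [qf_eq]; linarith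
lemma psi_le (f : ℂ → ℂ) (z : ℂ) : psi f z ≤ ‖f z‖ + 1 := by
  apply Real.sqrt_le_iff.2
  rw [qf_eq]
  exact ⟨by positivity, by nlinarith [norm_nonneg (f z)]⟩

lemma f_contDiffAt {f : ℂ → ℂ} (hf : DifferentiableOn ℂ f (ball (0:ℂ) 1)) {z : ℂ} (hz : z ∈ ball (0:ℂ) 1) : ContDiffAt ℝ 2 f z :=
  (((hf.contDiffOn isOpen_ball).contDiffAt (isOpen_ball.mem_nhds hz)).restrict_scalars ℝ)

lemma qf_contDiffAt {f : ℂ → ℂ} (hf : DifferentiableOn ℂ f (ball (0:ℂ) 1)) {z : ℂ} (hz : z ∈ ball (0:ℂ) 1) : ContDiffAt ℝ 2 (qf f) z := by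
  have h := f_contDiffAt hf hz
  have h1 : ContDiffAt ℝ 2 (fun z => (f z).re) z := reCLM.contDiff.contDiffAt.comp z h
  have h2 : ContDiffAt ℝ 2 (fun z => (f z).im) z := imCLM.contDiff.contDiffAt.comp z h
  exact contDiffAt_const.add ((h1.pow 2).add (h2.pow 2))

lemma psi_contDiffAt {f : ℂ → ℂ} (hf : DifferentiableOn ℂ f (ball (0:ℂ) 1)) {z : ℂ} (hz : z ∈ ball (0:ℂ) 1) : ContDiffAt ℝ 2 (psi f) z :=
  (qf_contDiffAt hf hz).sqrt (qf_pos f z).ne'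

lemma psi_contDiffOn {f : ℂ → ℂ} (hf : DifferentiableOn ℂ f (ball (0:ℂ) 1)) : ContDiffOn ℝ 2 (psi f) (ball (0:ℂ) 1) :=
  fun _ hz => (psi_contDiffAt hf hz).contDiffWithinAt

lemma re_fd {g : ℂ → ℂ} {z : ℂ} (h : DifferentiableAt ℂ g z) :
    HasFDerivAt (fun w => (g w).re) (reCLM.comp ((fderiv ℂ g z).restrictScalars ℝ)) z :=
  reCLM.hasFDerivAt.comp z (h.hasFDerivAt.restrictScalars ℝ)
lemma im_fd {g : ℂ → ℂ} {z : ℂ} (h : DifferentiableAt ℂ g z) :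
    HasFDerivAt (fun w => (g w).im) (imCLM.comp ((fderiv ℂ g z).restrictScalars ℝ)) z :=
  imCLM.hasFDerivAt.comp z (h.hasFDerivAt.restrictScalars ℝ)
lemma fd_apply {g : ℂ → ℂ} {z e : ℂ} : fderiv ℂ g z e = deriv g z * e := by
  rw [fderiv_eq_smul_deriv, smul_eq_mul, mul_comm]

lemma f_diff {f : ℂ → ℂ} (hf : DifferentiableOn ℂ f (ball (0:ℂ) 1)) {z : ℂ} (hz : z ∈ ball (0:ℂ) 1) : DifferentiableAt ℂ f z :=
  hf.differentiableAt (isOpen_ball.mem_nhds hz)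

lemma qf_fderiv {f : ℂ → ℂ} (hf : DifferentiableOn ℂ f (ball (0:ℂ) 1)) {z : ℂ} (hz : z ∈ ball (0:ℂ) 1) (e : ℂ) :
    fderiv ℝ (qf f) z e = 2 * ((f z).re * (deriv f z * e).re + (f z).im * (deriv f z * e).im) := by
  have h1 := re_fd (f_diff hf hz)
  have h2 := im_fd (f_diff hf hz)
  have h3 : HasFDerivAt (qf f) _ z := ((h1.pow 2).add (h2.pow 2)).const_add 1
  rw [h3.fderiv]
  simp [fd_apply]
  ring

lemma qf_fderiv2 {f : ℂ → ℂ} (hf : DifferentiableOn ℂ f (ball (0:ℂ) 1)) {z : ℂ} (hz : z ∈ ball (0:ℂ) 1) (e : ℂ) :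
    fderiv ℝ (fun w => fderiv ℝ (qf f) w e) z e =
      2 * (((deriv f z * e).re)^2 + ((deriv f z * e).im)^2 +
      ((f z).re * (deriv (deriv f) z * e * e).re + (f z).im * (deriv (deriv f) z * e * e).im)) := by
  have hev : (fun w => fderiv ℝ (qf f) w e) =ᶠ[𝓝 z]
     fun w => 2 * ((f w).re * (deriv f w * e).re + (f w).im * (deriv f w * e).im) := by
    filter_upwards [isOpen_ball.mem_nhds hz] with w hw using qf_fderiv hf hw e
  rw [hev.fderiv_eq]
  have hd : DifferentiableAt ℂ (deriv f) z := f_diff (hf.deriv isOpen_ball) hz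
  have hd2 : DifferentiableAt ℂ (fun w => deriv f w * e) z := hd.mul_const e
  have hde : deriv (fun w => deriv f w * e) z = deriv (deriv f) z * e := by
    rw [deriv_mul_const hd]
  have h1 := re_fd (f_diff hf hz)
  have h2 := im_fd (f_diff hf hz)
  have h3 := re_fd hd2
  have h4 := im_fd hd2
  have h5 : HasFDerivAt (fun w => 2 * ((f w).re * (deriv f w * e).re + (f w).im * (deriv f w * e).im)) _ z :=
    ((h1.mul h3).add (h2.mul h4)).const_mul 2
  rw [h5.fderiv]
  simp only [add_apply, smul_apply, ContinuousLinearMap.comp_apply,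
    ContinuousLinearMap.coe_restrictScalars', fd_apply, hde, reCLM_apply, imCLM_apply, smul_eq_mul]
  ring

lemma qf_lap {f : ℂ → ℂ} (hf : DifferentiableOn ℂ f (ball (0:ℂ) 1)) {z : ℂ} (hz : z ∈ ball (0:ℂ) 1) :
    lap (qf f) z = 4 * ((deriv f z).re ^ 2 + (deriv f z).im ^ 2) := by
  unfold lap
  rw [qf_fderiv2 hf hz, qf_fderiv2 hf hz]
  simp
  ring

lemma psi_lap {f : ℂ → ℂ} (hf : DifferentiableOn ℂ f (ball (0:ℂ) 1)) {z : ℂ} (hz : z ∈ ball (0:ℂ) 1) : 0 ≤ lap (psi f) z := by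
  have hc := psi_contDiffAt hf hz
  have h1 := lap_mul hc hc
  have h2 : (fun v => psi f v * psi f v) = qf f := funext (psi_sq f)
  have hd : HasFDerivAt (psi f) (fderiv ℝ (psi f) z) z := (hc.differentiableAt (by norm_num)).hasFDerivAt
  have h3 : ∀ e, fderiv ℝ (qf f) z e = 2 * psi f z * fderiv ℝ (psi f) z e := by
    intro e
    have h5 : HasFDerivAt (fun v => psi f v * psi f v) _ z := hd.mul hd
    rw [h2] at h5
    rw [h5.fderiv]; simp; ring
  rw [h2, qf_lap hf hz] at h1
  have a1 := h3 1
  have a2 := h3 I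
  rw [qf_fderiv hf hz] at a1 a2
  simp at a1 a2
  set x := fderiv ℝ (psi f) z 1
  set y := fderiv ℝ (psi f) z I
  have hp := psi_pos f z
  have hs := psi_sq f z
  unfold qf at hs
  set p := psi f z
  set L := lap (psi f) z
  set a := (f z).re
  set b := (f z).im
  set c := (deriv f z).re
  set d := (deriv f z).im
  have k1 : p * x = a * c + b * d := by linarith
  have k2 : p * y = -(a * d) + b * c := by linarith
  have k3 : p^2 * (x^2+y^2) = (a^2+b^2)*(c^2+d^2) := by
    have : p^2 * (x^2+y^2) = (p*x)^2 + (p*y)^2 := by ring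
    rw [this, k1, k2]; ring
  have k4 : p^3 * L = (c^2+d^2) * (p^2+1) := by
    have : p * L = 2 * (c^2+d^2) - (x^2+y^2) := by linarith
    have h6: p^3 * L = p^2 * (p*L) := by ring
    rw [h6, this, mul_sub, k3]
    have : a^2+b^2 = p^2-1 := by linarith
    rw [this]; ring
  by_contra hL
  push Not at hL
  have : p^3 * L < 0 := mul_neg_of_pos_of_neg (by positivity) hL
  rw [k4] at this
  have : 0 ≤ (c^2+d^2) * (p^2+1) := by positivity
  linarith


abbrev Bs (r : ℝ) : Set ℂ := {z | z ∈ ball (0:ℂ) 1 ∧ uf z < r}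
def Jint (f : ℂ → ℂ) (r : ℝ) (z : ℂ) : ℝ := (r - uf z) * lap (psi f) z + psi f z * lap uf z
def Jr (f : ℂ → ℂ) (r : ℝ) : ℝ := 4⁻¹ * ∫ z in Bs r, Jint f r z

lemma Jint_nonneg {f : ℂ → ℂ} (hf : DifferentiableOn ℂ f (ball (0:ℂ) 1)) {r : ℝ} {z : ℂ} (hz : z ∈ Bs r) :
    0 ≤ Jint f r z := by
  have h1 := psi_lap hf hz.1
  have h2 := uf_lap_ge hz.1
  have h3 := psi_pos f z
  have h4 : 0 ≤ r - uf z := by linarith [hz.2]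
  unfold Jint
  have := mul_nonneg h4 h1
  have : 0 ≤ psi f z * lap uf z := mul_nonneg h3.le (by linarith)
  linarith

lemma Jint_integrable {f : ℂ → ℂ} (hf : DifferentiableOn ℂ f (ball (0:ℂ) 1)) {r : ℝ} (hr : r < 0) :
    IntegrableOn (Jint f r) (Bs r) := by
  have hR1 := (min_facts hr).2
  have hR0 : 0 < 1 - min (r^2/4) (1/2:ℝ) := by
    have := min_le_right (r^2/4) (1/2:ℝ); linarith
  set R := 1 - min (r^2/4) (1/2:ℝ) with hR
  obtain ⟨G, hG, hGc, -, hGe⟩ := globalize (psi_contDiffOn hf) (R := (1+R)/2) (by linarith) (by linarith)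
  obtain ⟨U, hU, hUc, -, hUe⟩ := globalize uf_contDiffOn (R := (1+R)/2) (by linarith) (by linarith)
  have hi : Integrable (fun z => (r - U z) * lap G z + G z * lap U z) :=
    (((continuous_const.sub hU.continuous).mul (cont_lap hG)).integrable_of_hasCompactSupport
      (hcs_lap hGc).mul_left).add
    ((hG.continuous.mul (cont_lap hU)).integrable_of_hasCompactSupport hGc.mul_right)
  refine hi.integrableOn.congr_fun ?_ (subl_meas r)
  intro z hz
  have hzb : z ∈ ball (0:ℂ) ((1+R)/2) := by
    have := uf_sub hz.1 hr hz.2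
    rw [mem_ball_zero_iff]; linarith
  have hn := isOpen_ball.mem_nhds hzb
  simp only [Jint]
  rw [hGe z hzb, hUe z hzb, lap_congr (φ := G) (ψ := psi f), lap_congr (φ := U) (ψ := uf)]
  · filter_upwards [hn] with w hw using hUe w hw
  · filter_upwards [hn] with w hw using hGe w hw

lemma Jr_eq {f : ℂ → ℂ} (hf : DifferentiableOn ℂ f (ball (0:ℂ) 1)) {r : ℝ} (hr : r < 0) :
    ∫⁻ z, ENNReal.ofReal (psi f z) ∂(sig r) = ENNReal.ofReal (Jr f r) := by
  have hR1 := (min_facts hr).2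
  have hR0 : 0 < 1 - min (r^2/4) (1/2:ℝ) := by
    have := min_le_right (r^2/4) (1/2:ℝ); linarith
  obtain ⟨hfin, hs, hφ⟩ := sig_spec hr
  set R := 1 - min (r^2/4) (1/2:ℝ) with hR
  obtain ⟨G, hG, hGc, -, hGe⟩ := globalize (psi_contDiffOn hf) (R := (1+R)/2) (by linarith) (by linarith)
  have hae : ∀ᵐ z ∂(sig r), G z = psi f z := by
    rw [ae_iff]
    refine measure_mono_null ?_ hs
    intro z hz hz2
    refine hz (hGe z ?_)
    rw [mem_closedBall_zero_iff] at hz2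
    rw [mem_ball_zero_iff]; linarith
  have h1 := hφ G hG hGc
  have h2 : (4⁻¹ * ∫ z in {z | z ∈ ball (0:ℂ) 1 ∧ uf z < r}, ((r - uf z) * lap G z + G z * lap uf z)) = Jr f r := by
    unfold Jr
    congr 1
    refine setIntegral_congr_fun (subl_meas r) ?_
    intro z hz
    have hzb : z ∈ ball (0:ℂ) ((1+R)/2) := by
      have := uf_sub hz.1 hr hz.2
      rw [mem_ball_zero_iff]; linarith
    have hn := isOpen_ball.mem_nhds hzb
    simp only [Jint]
    rw [hGe z hzb, lap_congr (φ := G) (ψ := psi f)]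
    filter_upwards [hn] with w hw using hGe w hw
  rw [← h2, ← h1, ofReal_integral_eq_lintegral_ofReal (hG.continuous.integrable_of_hasCompactSupport hGc)]
  · refine lintegral_congr_ae ?_
    filter_upwards [hae] with z hz
    rw [hz]
  · filter_upwards [hae] with z hz
    rw [hz]; exact (psi_pos f z).le

lemma sig_mass {r : ℝ} (hr : r < 0) : sig r univ ≤ nuf univ := by
  have h := Jr_eq (f := fun _ => 0) (differentiableOn_const _) hr
  have h1 : ∀ z, psi (fun _ => 0) z = 1 := fun z => by simp [psi, qf]
  have h2 : psi (fun _ => 0) = fun _ => (1:ℝ) := funext h1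
  have h3 : Jr (fun _ => 0) r = ∫ z in Bs r, (1:ℝ) ∂nuf := by
    rw [nuf_int _ (subl_meas r)]
    have : Bs r ∩ ball (0:ℂ) 1 = Bs r := inter_eq_left.2 fun z h => h.1
    rw [this, Jr, ← integral_const_mul]
    congr 1; ext z
    rw [Jint, h2]
    simp [lap]; ring
  rw [h3, h2] at h
  simp at h
  rw [h]
  exact measure_mono (subset_univ _)

lemma ps_bound {f : ℂ → ℂ} (hf : MemPS 1 (ball (0:ℂ) 1) sig f) :
    ∃ M : ℝ, ∀ᶠ r in 𝓝[<] (0:ℝ), Jr f r ≤ M := by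
  obtain ⟨hd, hl⟩ := hf
  obtain ⟨b, hb1, hb2⟩ := exists_between hl
  have hev := Filter.eventually_lt_of_limsup_lt hb1
  refine ⟨(b + nuf univ).toReal, ?_⟩
  filter_upwards [hev, self_mem_nhdsWithin] with r h1 h2
  have hr : r < 0 := h2
  have hfin := (sig_spec hr).1
  have hne : b + nuf univ ≠ ⊤ := ENNReal.add_ne_top.2 ⟨hb2.ne, measure_ne_top _ _⟩
  rw [← ENNReal.ofReal_le_iff_le_toReal hne, ← Jr_eq hd hr]
  calc ∫⁻ z, ENNReal.ofReal (psi f z) ∂(sig r) ≤ ∫⁻ z, (ENNReal.ofReal (‖f z‖ ^ (1:ℝ)) + 1) ∂(sig r) := by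
        refine lintegral_mono fun z => ?_
        rw [Real.rpow_one, ← ENNReal.ofReal_one, ← ENNReal.ofReal_add (norm_nonneg _) zero_le_one]
        exact ENNReal.ofReal_le_ofReal (psi_le f z)
    _ = (∫⁻ z, ENNReal.ofReal (‖f z‖ ^ (1:ℝ)) ∂(sig r)) + sig r univ := by
        rw [lintegral_add_right _ measurable_const]; simp
    _ ≤ b + nuf univ := add_le_add h1.le (sig_mass hr)


def mean (G : ℂ → ℝ) (z : ℂ) : ℝ := ∫ θ in (0:ℝ)..(2 * Real.pi), G (z * Complex.exp ((θ:ℂ) * Complex.I))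

lemma mean_cont {G : ℂ → ℝ} (hG : Continuous G) : Continuous (mean G) := by
  unfold mean
  refine intervalIntegral.continuous_parametric_intervalIntegral_of_continuous' ?_ _ _
  simp only [Function.uncurry_def]
  fun_prop

lemma mean_radial (G : ℂ → ℝ) (z : ℂ) : mean G z = mean G (‖z‖ : ℂ) := by
  unfold mean
  have h1 : ∀ θ : ℝ, G (z * Complex.exp ((θ:ℂ) * Complex.I)) =
      (fun t : ℝ => G ((‖z‖ : ℂ) * Complex.exp ((t:ℂ) * Complex.I))) (θ + z.arg) := by
    intro θ
    simp only
    conv_lhs => rw [← norm_mul_exp_arg_mul_I z]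
    rw [mul_assoc, ← Complex.exp_add]
    congr 3
    push_cast; ring
  have hper : Function.Periodic (fun t : ℝ => G ((‖z‖ : ℂ) * Complex.exp ((t:ℂ) * Complex.I))) (2 * Real.pi) := by
    intro t
    simp only
    congr 2
    have : ((t + 2 * Real.pi : ℝ) : ℂ) * I = t * I + 2 * Real.pi * I := by push_cast; ring
    rw [this, Complex.exp_periodic]
  simp_rw [h1]
  rw [intervalIntegral.integral_comp_add_right (fun t : ℝ => G ((‖z‖ : ℂ) * Complex.exp ((t:ℂ) * Complex.I)))]
  have := hper.intervalIntegral_add_eq z.arg 0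
  rw [zero_add] at this
  rw [zero_add, add_comm]
  exact this

lemma mean_int {G K : ℂ → ℝ} (hG : Continuous G) (hGc : HasCompactSupport G) (hK : Continuous K)
    (hKc : HasCompactSupport K) (hr : ∀ z w : ℂ, ‖z‖ = ‖w‖ → K z = K w) :
    2 * Real.pi * ∫ z, G z * K z = ∫ z, mean G z * K z := by
  have h1 : ∀ θ : ℝ, ∫ z, G (z * Complex.exp ((θ:ℂ) * Complex.I)) * K z = ∫ z, G z * K z := by
    intro θ
    have hm := (rotation (Circle.exp θ)).measurePreserving
    rw [← hm.integral_comp (rotation (Circle.exp θ)).toHomeomorph.measurableEmbedding (fun z => G z * K z)]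
    congr 1; ext z
    have e1 : rotation (Circle.exp θ) z = z * Complex.exp ((θ:ℂ) * Complex.I) := by
      rw [rotation_apply, Circle.coe_exp, mul_comm]
    rw [hr (rotation (Circle.exp θ) z) z (by simp), e1]
  have h2 : ∫ θ in (0:ℝ)..(2 * Real.pi), ∫ z, G (z * Complex.exp ((θ:ℂ) * Complex.I)) * K z =
      2 * Real.pi * ∫ z, G z * K z := by
    simp_rw [h1]; simp
  rw [← h2, intervalIntegral_integral_swap]
  · congr 1; ext z
    rw [mean, intervalIntegral.integral_mul_const]
  · obtain ⟨C, hC⟩ := hGc.exists_bound_of_continuous hG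
    have hKi := hK.integrable_of_hasCompactSupport hKc (μ := (volume : Measure ℂ))
    haveI : IsFiniteMeasure ((volume : Measure ℝ).restrict (Set.uIoc 0 (2 * Real.pi))) :=
      ⟨by rw [Measure.restrict_apply_univ, Set.uIoc]; exact measure_Ioc_lt_top⟩
    have h3 : Integrable (fun p : ℝ × ℂ => C * ‖K p.2‖) ((volume.restrict (Set.uIoc 0 (2 * Real.pi))).prod volume) :=
      (hKi.norm.const_mul C).comp_snd _
    refine h3.mono' ?_ ?_
    · refine Continuous.aestronglyMeasurable ?_
      simp only [Function.uncurry_def]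
      fun_prop
    · refine ae_of_all _ fun p => ?_
      simp only [Function.uncurry_def, norm_mul]
      exact mul_le_mul_of_nonneg_right (hC _) (norm_nonneg _)

def Wq (R : ℝ) : ℂ → ℝ := quad (R^2) 0 (-1)
lemma Wq_eq (R : ℝ) (z : ℂ) : Wq R z = R^2 - ‖z‖^2 := by
  rw [← normSq_eq_norm_sq, normSq_apply]; simp only [Wq, quad]; ring
def Ff (a R : ℝ) (z : ℂ) : ℝ := etaP a (Wq R z)
def Kf (a R : ℝ) (z : ℂ) : ℝ := deriv (deriv (etaP a)) (Wq R z) * (4 * ‖z‖^2)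

lemma Wq_cont (R : ℝ) : Continuous (Wq R) := (quad_contDiff _ _ _).continuous

lemma Ff_contDiff (a R : ℝ) : ContDiff ℝ 2 (Ff a R) := (etaP_contDiff a).comp (quad_contDiff _ _ _)

lemma Wq_nonpos {R : ℝ} (hR : 0 < R) {z : ℂ} (hz : z ∉ closedBall (0:ℂ) R) : Wq R z < 0 := by
  rw [mem_closedBall_zero_iff, not_le] at hz
  rw [Wq_eq]; nlinarith

lemma Ff_cs {a R : ℝ} (ha : 0 < a) (hR : 0 < R) : HasCompactSupport (Ff a R) :=
  HasCompactSupport.intro (isCompact_closedBall (0:ℂ) R) fun _ hz => etaP_of_nonpos ha (Wq_nonpos hR hz).le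

lemma Ff_lap {a : ℝ} (ha : 0 < a) (R : ℝ) (z : ℂ) :
    lap (Ff a R) z = Kf a R z - 4 * Real.smoothTransition (a * Wq R z) := by
  have := lap_comp (g := Wq R) (η := etaP a) (z := z) (quad_contDiff _ _ _).contDiffAt (etaP_contDiff a).contDiffAt
  change lap (fun v => etaP a (Wq R v)) z = _
  rw [this]
  have e2 : deriv (etaP a) (Wq R z) = Real.smoothTransition (a * Wq R z) := by rw [etaP_deriv ha]
  rw [e2, Kf, ← normSq_eq_norm_sq, normSq_apply]
  rw [Wq, quad_fderiv, quad_fderiv, quad_lap]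
  simp
  ring

lemma Kf_cont {a : ℝ} (ha : 0 < a) (R : ℝ) : Continuous (Kf a R) := by
  have := (etaP_deriv2_cont ha).comp (Wq_cont R)
  exact this.mul (by fun_prop)

lemma Kf_nonneg {a : ℝ} (ha : 0 < a) (R : ℝ) (z : ℂ) : 0 ≤ Kf a R z :=
  mul_nonneg (etaP_deriv2_nonneg ha _) (by positivity)

lemma Kf_zero {a : ℝ} (ha : 0 < a) {R : ℝ} {z : ℂ} (h : Wq R z < 0 ∨ 1 / a < Wq R z) : Kf a R z = 0 := by
  rw [Kf, etaP_deriv2_zero ha h, zero_mul]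

lemma Kf_cs {a R : ℝ} (ha : 0 < a) (hR : 0 < R) : HasCompactSupport (Kf a R) :=
  HasCompactSupport.intro (isCompact_closedBall (0:ℂ) R) fun _ hz => Kf_zero ha (Or.inl (Wq_nonpos hR hz))

lemma st_cs {a R : ℝ} (ha : 0 < a) (hR : 0 < R) : HasCompactSupport (fun z => Real.smoothTransition (a * Wq R z)) :=
  HasCompactSupport.intro (isCompact_closedBall (0:ℂ) R) fun _ hz =>
    Real.smoothTransition.zero_of_nonpos (mul_nonpos_of_nonneg_of_nonpos ha.le (Wq_nonpos hR hz).le)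

lemma st_cont (a R : ℝ) : Continuous (fun z => Real.smoothTransition (a * Wq R z)) :=
  Real.smoothTransition.continuous.comp (continuous_const.mul (Wq_cont R))

lemma Kf_int_ge {a R : ℝ} (ha : 6 ≤ a) (hR : 1/2 ≤ R) : Real.pi / 4 ≤ ∫ z, Kf a R z := by
  have ha0 : 0 < a := by linarith
  have hR0 : 0 < R := by linarith
  have h := ibp (φ := fun _ => 1) (Ff_contDiff a R) contDiff_const (Ff_cs ha0 hR0)
  have hl : ∀ z, lap (fun _ => (1:ℝ)) z = 0 := fun z => by simp [lap]
  have hst := (st_cont a R).integrable_of_hasCompactSupport (st_cs ha0 hR0) (μ := (volume : Measure ℂ))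
  simp only [hl, mul_zero, one_mul, Ff_lap ha0, integral_zero] at h
  rw [integral_sub ((Kf_cont ha0 R).integrable_of_hasCompactSupport (Kf_cs ha0 hR0)) (hst.const_mul 4),
    integral_const_mul] at h
  have h2 : ∫ z in ball (0:ℂ) (1/4), (1:ℝ) ≤ ∫ z, Real.smoothTransition (a * Wq R z) := by
    rw [← integral_indicator measurableSet_ball]
    refine integral_mono ?_ hst ?_
    · rw [integrable_indicator_iff measurableSet_ball]
      exact integrableOn_const (by exact measure_ball_lt_top.ne)
    · intro z
      by_cases hz : z ∈ ball (0:ℂ) (1/4)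
      · rw [indicator_of_mem hz]
        refine (Real.smoothTransition.one_of_one_le ?_).ge
        rw [mem_ball_zero_iff] at hz
        rw [Wq_eq]
        have : 3/16 ≤ R^2 - ‖z‖^2 := by nlinarith [norm_nonneg z]
        nlinarith
      · rw [indicator_of_notMem hz]
        exact Real.smoothTransition.nonneg _
  have h3 : ∫ z in ball (0:ℂ) (1/4), (1:ℝ) = Real.pi / 16 := by
    simp [Measure.real, Complex.volume_ball]
    ring
  linarith


lemma GK_le {f : ℂ → ℂ} (hf : DifferentiableOn ℂ f (ball (0:ℂ) 1)) {R : ℝ} (hR : 1/2 ≤ R) (hR1 : R < 1)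
    {r : ℝ} (hr : r < 0) (hr2 : -(1 - R^2)/2 < r) {G : ℂ → ℝ} (hG : ContDiff ℝ 2 G)
    (hGe : ∀ z ∈ ball (0:ℂ) ((1+R)/2), G z = psi f z) {a : ℝ} (ha : 0 < a) :
    ∫ z, G z * Kf a R z ≤ 8 * Jr f r := by
  have hR0 : 0 < R := by linarith
  have h := ibp (φ := G) (Ff_contDiff a R) hG (Ff_cs ha hR0)
  simp only [Ff_lap ha] at h
  have iF : Integrable (fun z => Ff a R z * lap G z) :=
    ((Ff_contDiff a R).continuous.mul (cont_lap hG)).integrable_of_hasCompactSupport (Ff_cs ha hR0).mul_right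
  have iK : Integrable (fun z => G z * Kf a R z) :=
    (hG.continuous.mul (Kf_cont ha R)).integrable_of_hasCompactSupport (Kf_cs ha hR0).mul_left
  have iS : Integrable (fun z => 4 * (G z * Real.smoothTransition (a * Wq R z))) :=
    ((hG.continuous.mul (st_cont a R)).integrable_of_hasCompactSupport (st_cs ha hR0).mul_left).const_mul 4
  have e1 : ∫ z, G z * (Kf a R z - 4 * Real.smoothTransition (a * Wq R z)) =
      (∫ z, G z * Kf a R z) - ∫ z, 4 * (G z * Real.smoothTransition (a * Wq R z)) := by
    rw [← integral_sub iK iS]; congr 1; ext z; ring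
  have e2 : ∫ z, G z * Kf a R z = ∫ z, (Ff a R z * lap G z + 4 * (G z * Real.smoothTransition (a * Wq R z))) := by
    rw [integral_add iF iS]; linarith
  have e3 : 8 * Jr f r = ∫ z, (Bs r).indicator (fun z => 2 * Jint f r z) z := by
    rw [integral_indicator (subl_meas r), integral_const_mul, Jr]; ring
  rw [e2, e3]
  refine integral_mono (iF.add iS) ?_ ?_
  · exact (integrable_indicator_iff (subl_meas r)).2 ((Jint_integrable hf hr).const_mul 2)
  · intro z
    simp only
    by_cases hz : ‖z‖ < R
    · have hz1 : z ∈ ball (0:ℂ) 1 := by rw [mem_ball_zero_iff]; linarith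
      have hz2 : z ∈ ball (0:ℂ) ((1+R)/2) := by rw [mem_ball_zero_iff]; linarith
      have hu := uf_le hz1
      have hW : Wq R z = R^2 - ‖z‖^2 := Wq_eq R z
      have hWp : 0 < Wq R z := by rw [hW]; nlinarith [norm_nonneg z]
      have hB : z ∈ Bs r := ⟨hz1, by nlinarith⟩
      rw [indicator_of_mem hB, hGe z hz2, lap_congr (φ := G) (ψ := psi f)]
      · have l1 := psi_lap hf hz1
        have l2 := uf_lap_ge hz1
        have l3 := psi_pos f z
        have l4 : Ff a R z ≤ 2 * (r - uf z) := by
          have := etaP_le ha hWp.le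
          unfold Ff; linarith
        have l5 := Real.smoothTransition.le_one (a * Wq R z)
        have l6 := mul_le_mul_of_nonneg_right l4 l1
        have l7 : psi f z * Real.smoothTransition (a * Wq R z) ≤ psi f z * 1 := mul_le_mul_of_nonneg_left l5 l3.le
        have l8 : psi f z * 2 ≤ psi f z * lap uf z := mul_le_mul_of_nonneg_left l2 l3.le
        unfold Jint
        linarith
      · filter_upwards [isOpen_ball.mem_nhds hz2] with w hw using hGe w hw
    · have hWn : Wq R z ≤ 0 := by rw [Wq_eq]; push Not at hz; nlinarith
      have z1 : Ff a R z = 0 := etaP_of_nonpos ha hWn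
      have z2 : Real.smoothTransition (a * Wq R z) = 0 :=
        Real.smoothTransition.zero_of_nonpos (mul_nonpos_of_nonneg_of_nonpos ha.le hWn)
      rw [z1, z2]
      simp only [zero_mul, mul_zero, add_zero]
      refine indicator_nonneg (fun w hw => ?_) z
      have := Jint_nonneg hf hw
      positivity

lemma psi_mean_le {f : ℂ → ℂ} (hf : DifferentiableOn ℂ f (ball (0:ℂ) 1)) {R : ℝ} (hR : 1/2 ≤ R) (hR1 : R < 1)
    {r : ℝ} (hr : r < 0) (hr2 : -(1 - R^2)/2 < r) : mean (psi f) (R:ℂ) ≤ 64 * Jr f r := by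
  have hR0 : 0 < R := by linarith
  have hJ : 0 ≤ Jr f r := by
    unfold Jr
    exact mul_nonneg (by norm_num) (setIntegral_nonneg (subl_meas r) fun z hz => Jint_nonneg hf hz)
  obtain ⟨G, hG, hGc, -, hGe⟩ := globalize (psi_contDiffOn hf) (R := (1+R)/2) (by linarith) (by linarith)
  have hmc := mean_cont hG.continuous
  have hmG : mean G (R:ℂ) = mean (psi f) (R:ℂ) := by
    unfold mean
    congr 1; ext θ
    refine hGe _ ?_
    rw [mem_ball_zero_iff, norm_mul, norm_exp_ofReal_mul_I]
    simp [abs_of_pos hR0]; linarith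
  rw [← hmG]
  by_contra hcon0
  push Not at hcon0
  obtain ⟨A, hcon, hA⟩ := exists_between hcon0
  have hA0 : 0 ≤ A := le_trans (by positivity) hcon.le
  have hcont : Continuous (fun ρ : ℝ => mean G (√(R^2 - ρ) : ℝ)) :=
    hmc.comp (continuous_ofReal.comp (by fun_prop))
  have h0 : A < mean G (√(R^2 - 0) : ℝ) := by rw [sub_zero, Real.sqrt_sq hR0.le]; exact hA
  have hev := (hcont.tendsto 0).eventually (lt_mem_nhds h0)
  obtain ⟨δ, hδ, hball⟩ := Metric.eventually_nhds_iff.1 hev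
  set a := max 6 (2/δ) with ha
  have ha6 : 6 ≤ a := le_max_left _ _
  have ha0 : 0 < a := by linarith
  have had : 1/a < δ := by
    rw [div_lt_iff₀ ha0]
    have : 2/δ ≤ a := le_max_right _ _
    rw [div_le_iff₀ hδ] at this
    linarith
  have hKi := (Kf_cont ha0 R).integrable_of_hasCompactSupport (Kf_cs ha0 hR0) (μ := (volume : Measure ℂ))
  have h1 := mean_int hG.continuous hGc (Kf_cont ha0 R) (Kf_cs ha0 hR0) (by
    intro z w h
    rw [Kf, Kf, Wq_eq, Wq_eq, h])
  have h2 : ∫ z, A * Kf a R z ≤ ∫ z, mean G z * Kf a R z := by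
    refine integral_mono (hKi.const_mul A) ((hmc.mul (Kf_cont ha0 R)).integrable_of_hasCompactSupport (Kf_cs ha0 hR0).mul_left) ?_
    intro z
    simp only
    by_cases hz : Wq R z < 0 ∨ 1 / a < Wq R z
    · rw [Kf_zero ha0 hz]; simp
    · push Not at hz
      refine mul_le_mul_of_nonneg_right ?_ (Kf_nonneg ha0 R z)
      have := @hball (Wq R z) (by rw [Real.dist_eq, sub_zero, abs_of_nonneg hz.1]; linarith)
      rw [mean_radial]
      rw [Wq_eq, sub_sub_cancel, Real.sqrt_sq (norm_nonneg z)] at this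
      exact this.le
  rw [integral_const_mul] at h2
  have h3 := Kf_int_ge ha6 hR
  have h4 := GK_le hf hR hR1 hr hr2 hG hGe ha0
  have h5 : A * (Real.pi/4) ≤ A * ∫ z, Kf a R z := mul_le_mul_of_nonneg_left h3 hA0
  have h6 : 2 * Real.pi * ∫ z, G z * Kf a R z ≤ 2 * Real.pi * (8 * Jr f r) :=
    mul_le_mul_of_nonneg_left h4 (by positivity)
  have h7 : Real.pi * A ≤ Real.pi * (64 * Jr f r) := by linarith
  have h8 : A ≤ 64 * Jr f r := le_of_mul_le_mul_left h7 Real.pi_pos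
  linarith

lemma incl {f : ℂ → ℂ} (hf : MemPS 1 (ball (0:ℂ) 1) sig f) : MemH1Disc f := by
  obtain ⟨M, hM⟩ := ps_bound hf
  have hd := hf.1
  have hcf : ContinuousOn f (ball (0:ℂ) 1) := hd.continuousOn
  have hsub : closedBall (0:ℂ) (1/2) ⊆ ball (0:ℂ) 1 := closedBall_subset_ball (by norm_num)
  obtain ⟨C, hC⟩ := (isCompact_closedBall (0:ℂ) (1/2)).exists_bound_of_continuousOn (hcf.mono hsub)
  refine ⟨hd, max (64 * M) (2 * Real.pi * C), ?_⟩
  intro R hR0 hR1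
  have hnorm : ∀ θ : ℝ, ‖(R : ℂ) * Complex.exp ((θ : ℂ) * Complex.I)‖ = R := by
    intro θ
    rw [norm_mul, norm_exp_ofReal_mul_I]; simp [abs_of_pos hR0]
  have hmem : ∀ θ : ℝ, (R : ℂ) * Complex.exp ((θ : ℂ) * Complex.I) ∈ ball (0:ℂ) 1 := by
    intro θ; rw [mem_ball_zero_iff, hnorm]; exact hR1
  have hcc : Continuous (fun θ : ℝ => (R : ℂ) * Complex.exp ((θ : ℂ) * Complex.I)) := by fun_prop
  have hfc : Continuous (fun θ : ℝ => ‖f ((R : ℂ) * Complex.exp ((θ : ℂ) * Complex.I))‖) :=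
    (hcf.comp_continuous hcc hmem).norm
  rcases le_total (1/2) R with h | h
  · refine le_trans ?_ (le_max_left _ _)
    have h1 : -(1 - R^2)/2 < 0 := by nlinarith
    have hev : ∀ᶠ r in 𝓝[<] (0:ℝ), -(1 - R^2)/2 < r := nhdsWithin_le_nhds (lt_mem_nhds h1)
    obtain ⟨r, ⟨hr1, hr2⟩, hr3⟩ := ((hM.and hev).and self_mem_nhdsWithin).exists
    have h2 := psi_mean_le hd h hR1 hr3 hr2
    have hpc : Continuous (fun θ : ℝ => psi f ((R : ℂ) * Complex.exp ((θ : ℂ) * Complex.I))) :=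
      (psi_contDiffOn hd).continuousOn.comp_continuous hcc hmem
    have h3 : (∫ θ in (0:ℝ)..(2 * Real.pi), ‖f ((R : ℂ) * Complex.exp ((θ : ℂ) * Complex.I))‖) ≤ mean (psi f) (R:ℂ) :=
      intervalIntegral.integral_mono_on (by positivity) (hfc.intervalIntegrable _ _) (hpc.intervalIntegrable _ _)
        (fun θ _ => norm_le_psi f _)
    linarith
  · refine le_trans ?_ (le_max_right _ _)
    have h3 := intervalIntegral.integral_mono_on (μ := volume) (a := 0) (b := 2 * Real.pi) (by positivity)
      (hfc.intervalIntegrable _ _) (_root_.intervalIntegrable_const (c := C))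
        (fun θ _ => hC ((R : ℂ) * Complex.exp ((θ : ℂ) * Complex.I)) (by rw [mem_closedBall_zero_iff, hnorm]; exact h))
    simpa using h3


def fz (z : ℂ) : ℂ := (1 - z) ^ ((-(3/4) : ℝ) : ℂ)

lemma fz_norm (z : ℂ) : ‖fz z‖ = ‖1 - z‖ ^ (-(3/4) : ℝ) := norm_cpow_real _ _

lemma fz_diff : DifferentiableOn ℂ fz (ball (0:ℂ) 1) := by
  intro z hz
  have h1 : 1 - z ∈ slitPlane := by
    left
    have := norm_lt_of_mem hz
    have := (le_abs_self z.re).trans (abs_re_le_norm z)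
    simp; linarith
  have : DifferentiableAt ℂ fz z :=
    ((differentiableAt_const (1:ℂ)).sub differentiableAt_id).cpow (differentiableAt_const _) h1
  exact this.differentiableWithinAt

lemma sin_lb {θ : ℝ} (h0 : 0 < θ) (h1 : θ < 2 * Real.pi) :
    θ * Real.pi⁻¹ ≤ Real.sin (θ/2) ∨ (2 * Real.pi - θ) * Real.pi⁻¹ ≤ Real.sin (θ/2) := by
  rcases le_total (θ/2) (Real.pi/2) with h | h
  · left
    have := Real.mul_le_sin (by linarith) h
    refine le_trans (le_of_eq ?_) this
    field_simp
  · right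
    have := Real.mul_le_sin (x := Real.pi - θ/2) (by linarith) (by linarith)
    rw [Real.sin_pi_sub] at this
    refine le_trans (le_of_eq ?_) this
    field_simp

lemma norm_lb {R θ : ℝ} (hR0 : 0 < R) (hR1 : R < 1) (h0 : 0 < θ) (h1 : θ < 2 * Real.pi) :
    Real.sin (θ/2) ≤ ‖1 - (R:ℂ) * Complex.exp ((θ:ℂ) * Complex.I)‖ := by
  have e1 : ‖Complex.exp ((θ:ℂ) * Complex.I) - 1‖ = 2 * Real.sin (θ/2) := by
    have := norm_exp_I_mul_ofReal_sub_one θ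
    rw [mul_comm I] at this
    rw [this, Real.norm_of_nonneg]
    have := Real.sin_nonneg_of_nonneg_of_le_pi (x := θ/2) (by linarith) (by linarith)
    linarith
  have e2 : ‖(R:ℂ) * Complex.exp ((θ:ℂ) * Complex.I)‖ = R := by
    rw [norm_mul, norm_exp_ofReal_mul_I]; simp [abs_of_pos hR0]
  have e3 := one_sub_norm_le ((R:ℂ) * Complex.exp ((θ:ℂ) * Complex.I))
  rw [e2] at e3
  have e4 : Complex.exp ((θ:ℂ) * Complex.I) - 1 = ((1-R : ℝ) : ℂ) * Complex.exp ((θ:ℂ) * Complex.I)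
     - (1 - (R:ℂ) * Complex.exp ((θ:ℂ) * Complex.I)) := by push_cast; ring
  have e5 : ‖((1-R : ℝ) : ℂ) * Complex.exp ((θ:ℂ) * Complex.I)‖ = 1 - R := by
    rw [norm_mul, norm_exp_ofReal_mul_I, norm_real, Real.norm_of_nonneg (by linarith), mul_one]
  have e6 := norm_sub_le (((1-R : ℝ) : ℂ) * Complex.exp ((θ:ℂ) * Complex.I)) (1 - (R:ℂ) * Complex.exp ((θ:ℂ) * Complex.I))
  rw [← e4, e5, e1] at e6
  linarith

lemma fz_H1 : MemH1Disc fz := by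
  let g : ℝ → ℝ := fun θ => θ ^ (-(3/4):ℝ) * (Real.pi⁻¹) ^ (-(3/4):ℝ) +
    (2 * Real.pi - θ) ^ (-(3/4):ℝ) * (Real.pi⁻¹) ^ (-(3/4):ℝ)
  have hi1 : IntervalIntegrable (fun θ : ℝ => θ ^ (-(3/4):ℝ)) volume 0 (2 * Real.pi) :=
    intervalIntegral.intervalIntegrable_rpow' (by norm_num)
  have hi2 : IntervalIntegrable (fun θ : ℝ => (2 * Real.pi - θ) ^ (-(3/4):ℝ)) volume 0 (2 * Real.pi) := by
    have := (hi1.comp_sub_left (2 * Real.pi)).symm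
    simpa using this
  have hg : IntervalIntegrable g volume 0 (2 * Real.pi) := (hi1.mul_const _).add (hi2.mul_const _)
  refine ⟨fz_diff, ∫ θ in (0:ℝ)..(2 * Real.pi), g θ, ?_⟩
  intro R hR0 hR1
  have hmem : ∀ θ : ℝ, (R : ℂ) * Complex.exp ((θ : ℂ) * Complex.I) ∈ ball (0:ℂ) 1 := by
    intro θ; rw [mem_ball_zero_iff, norm_mul, norm_exp_ofReal_mul_I]; simp [abs_of_pos hR0, hR1]
  have hcc : Continuous (fun θ : ℝ => (R : ℂ) * Complex.exp ((θ : ℂ) * Complex.I)) := by fun_prop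
  have hfc : Continuous (fun θ : ℝ => ‖fz ((R : ℂ) * Complex.exp ((θ : ℂ) * Complex.I))‖) :=
    (fz_diff.continuousOn.comp_continuous hcc hmem).norm
  refine intervalIntegral.integral_mono_on_of_le_Ioo (by positivity) (hfc.intervalIntegrable _ _) hg ?_
  rintro θ ⟨h0, h1⟩
  rw [fz_norm]
  have hb := norm_lb hR0 hR1 h0 h1
  have hpi := Real.pi_pos
  have h2 : 0 < 2 * Real.pi - θ := by linarith
  have n1 : 0 ≤ θ ^ (-(3/4):ℝ) * (Real.pi⁻¹) ^ (-(3/4):ℝ) := by positivity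
  have n2 : 0 ≤ (2 * Real.pi - θ) ^ (-(3/4):ℝ) * (Real.pi⁻¹) ^ (-(3/4):ℝ) :=
    mul_nonneg (Real.rpow_nonneg h2.le _) (by positivity)
  simp only [g]
  rcases sin_lb h0 h1 with h | h
  · have := Real.rpow_le_rpow_of_nonpos (z := -(3/4)) (by positivity) (h.trans hb) (by norm_num)
    rw [Real.mul_rpow h0.le (by positivity)] at this
    linarith
  · have := Real.rpow_le_rpow_of_nonpos (z := -(3/4)) (by positivity) (h.trans hb) (by norm_num)
    rw [Real.mul_rpow h2.le (by positivity)] at this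
    linarith

lemma fz_Jr {d r : ℝ} (hd : 0 < d) (hd2 : d < 1/2) (hr : r < 0) (hr2 : -d/4 < r) :
    3 * Real.pi / 1024 * (2*d) ^ (-(1/4):ℝ) ≤ Jr fz r := by
  have hS : ∀ z ∈ closedBall ((1 - d : ℝ) : ℂ) (d/2), ‖z‖ ≤ 1 - d/2 ∧ ‖1 - z‖ ≤ 2 * d := by
    intro z hz
    rw [mem_closedBall, dist_eq_norm] at hz
    constructor
    · have := norm_add_le (z - ((1 - d : ℝ) : ℂ)) ((1 - d : ℝ) : ℂ)
      rw [sub_add_cancel, norm_real, Real.norm_of_nonneg (by linarith)] at this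
      linarith
    · have h1 : 1 - z = (d : ℂ) - (z - ((1 - d : ℝ) : ℂ)) := by push_cast; ring
      rw [h1]
      have := norm_sub_le (d:ℂ) (z - ((1 - d : ℝ) : ℂ))
      rw [norm_real, Real.norm_of_nonneg hd.le] at this
      linarith
  set S := closedBall ((1 - d : ℝ) : ℂ) (d/2)
  have hSb : ∀ z ∈ S, z ∈ ball (0:ℂ) 1 := fun z hz => by
    rw [mem_ball_zero_iff]; linarith [(hS z hz).1]
  have hSB : S ⊆ Bs r := by
    intro z hz
    refine ⟨hSb z hz, ?_⟩
    have h1 := uf_le (hSb z hz)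
    have h2 := (hS z hz).1
    nlinarith [norm_nonneg z]
  set c := (2*d) ^ (-(3/4):ℝ) * (3/4 * (d/2) * (2*d) ^ (-(5/2):ℝ)) with hc
  have hpt : ∀ z ∈ S, c ≤ Jint fz r z := by
    intro z hz
    have hzb := hSb z hz
    have hp := norm_pos' hzb
    have h1 : (2*d) ^ (-(3/4):ℝ) ≤ psi fz z := by
      refine le_trans ?_ (norm_le_psi fz z)
      rw [fz_norm]
      exact Real.rpow_le_rpow_of_nonpos hp (hS z hz).2 (by norm_num)
    have h2 : 3/4 * (d/2) * (2*d) ^ (-(5/2):ℝ) ≤ lap uf z := by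
      rw [uf_lap hzb]
      have e2 : (Nf z) ^ (-(5/4):ℝ) = ‖1 - z‖ ^ (-(5/2):ℝ) := by
        rw [Nf_eq, ← Real.rpow_natCast, ← Real.rpow_mul hp.le]; norm_num
      have h3 : (2*d) ^ (-(5/2):ℝ) ≤ (Nf z) ^ (-(5/4):ℝ) := by
        rw [e2]; exact Real.rpow_le_rpow_of_nonpos hp (hS z hz).2 (by norm_num)
      have h4 : d/2 ≤ Af z := by
        rw [Af_eq]; nlinarith [norm_nonneg z, (hS z hz).1]
      have h5 : 0 ≤ (Nf z) ^ (-(1/4):ℝ) := Real.rpow_nonneg (Nf_pos hzb).le _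
      have h6 : 3/4 * (d/2) * (2*d) ^ (-(5/2):ℝ) ≤ 3/4 * Af z * (Nf z) ^ (-(5/4):ℝ) :=
        mul_le_mul (by linarith) h3 (by positivity) (by have := Af_pos hzb; positivity)
      linarith
    have h7 : c ≤ psi fz z * lap uf z := mul_le_mul h1 h2 (by positivity) (psi_pos _ _).le
    have h8 : 0 ≤ (r - uf z) * lap (psi fz) z :=
      mul_nonneg (by linarith [(hSB hz).2]) (psi_lap fz_diff hzb)
    unfold Jint; linarith
  have hint := Jint_integrable fz_diff hr
  have h1 : ∫ z in S, c ≤ ∫ z in S, Jint fz r z :=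
    setIntegral_mono_on (integrableOn_const measure_closedBall_lt_top.ne) (hint.mono_set hSB)
      measurableSet_closedBall hpt
  have h2 : ∫ z in S, Jint fz r z ≤ ∫ z in Bs r, Jint fz r z := by
    refine setIntegral_mono_set hint ?_ hSB.eventuallyLE
    filter_upwards [ae_restrict_mem (subl_meas r)] with z hz using Jint_nonneg fz_diff hz
  have h3 : ∫ z in S, c = Real.pi * (d/2)^2 * c := by
    rw [setIntegral_const, smul_eq_mul]
    congr 1
    simp only [Measure.real, S, Complex.volume_closedBall]
    simp [ENNReal.toReal_ofReal (by positivity : (0:ℝ) ≤ d/2)]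
    ring
  have h4 : c = 3/8 * d * ((2*d) ^ (-(1/4):ℝ) * ((2*d)^3)⁻¹) := by
    have hd0 : 0 < 2 * d := by linarith
    have e : (2*d) ^ (-(3/4):ℝ) * (2*d) ^ (-(5/2):ℝ) = (2*d) ^ (-(1/4):ℝ) * ((2*d)^3)⁻¹ := by
      rw [← Real.rpow_natCast, ← Real.rpow_neg hd0.le, ← Real.rpow_add hd0, ← Real.rpow_add hd0]
      norm_num
    rw [hc, ← e]; ring
  have h5 : 3 * Real.pi / 1024 * (2*d) ^ (-(1/4):ℝ) = 4⁻¹ * (Real.pi * (d/2)^2 * c) := by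
    rw [h4]; field_simp; ring
  rw [h5, ← h3, Jr]
  exact mul_le_mul_of_nonneg_left (h1.trans h2) (by norm_num)

lemma fz_not : ¬ MemPS 1 (ball (0:ℂ) 1) sig fz := by
  intro h
  obtain ⟨M, hM⟩ := ps_bound h
  have hpi := Real.pi_pos
  set κ := 3 * Real.pi / 1024 with hκ
  have hκ0 : 0 < κ := by positivity
  set t := max 2 ((|M|+1)/κ) with ht
  have ht2 : 2 ≤ t := le_max_left _ _
  have ht0 : 0 < t := by linarith
  have htM : |M| + 1 ≤ κ * t := by
    have : (|M|+1)/κ ≤ t := le_max_right _ _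
    rw [div_le_iff₀ hκ0] at this; linarith
  set e := t ^ (-4:ℝ) with he
  have he0 : 0 < e := by positivity
  have he1 : e < 1 := Real.rpow_lt_one_of_one_lt_of_neg (by linarith) (by norm_num)
  have het : e ^ (-(1/4):ℝ) = t := by
    rw [he, ← Real.rpow_mul ht0.le]; norm_num
  have hev : ∀ᶠ r in 𝓝[<] (0:ℝ), -(e/2)/4 < r := nhdsWithin_le_nhds (lt_mem_nhds (by linarith))
  obtain ⟨r, ⟨hr1, hr2⟩, hr3⟩ := ((hM.and hev).and self_mem_nhdsWithin).exists
  have h1 := fz_Jr (d := e/2) (by linarith) (by linarith) hr3 hr2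
  rw [mul_div_cancel₀ e (two_ne_zero), het, ← hκ] at h1
  have := le_abs_self M
  linarith
/-- There is a negative continuous subharmonic exhaustion `u` of the unit
disc with finite Monge–Ampère mass whose Poletsky–Stessin Hardy space `H^1_u(𝔻)` is a
proper subset of the classical Hardy space `H^1(𝔻)`. -/
theorem stmt2 :
    ∃ (u : ℂ → ℝ) (ν : Measure ℂ) (μfam : ℝ → Measure ℂ),
      IsExhaustion u (ball (0:ℂ) 1) ∧
      IsRieszMeasure u (ball (0:ℂ) 1) ν ∧
      ν Set.univ < ⊤ ∧
      (∀ r : ℝ, r < 0 → IsMAMeasure u (ball (0:ℂ) 1) ν r (μfam r)) ∧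
      {f : ℂ → ℂ | MemPS 1 (ball (0:ℂ) 1) μfam f} ⊂ {f : ℂ → ℂ | MemH1Disc f} := by
  refine ⟨uf, nuf, sig, uf_exhaustion, nuf_riesz, measure_lt_top _ _, fun r hr => sig_MA hr, ?_⟩
  rw [Set.ssubset_iff_subset_ne]
  refine ⟨fun f hf => incl hf, fun h => ?_⟩
  have h1 : fz ∈ {f : ℂ → ℂ | MemH1Disc f} := fz_H1
  rw [← h] at h1
  exact fz_not h1

end
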